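/- arXiv:1609.09796 — 7 statements merged into one kernel-verified Lean document; each statement's English description precedes it below -/
import Mathlib

section
/- Let q ≥ 1 and let D be a symmetric q-Kalmanson n×n real matrix with n ≥ 2q+1. Then the identity permutation ⟨1,2,…,n⟩ minimizes the q-stripe TSP objective, i.e. F_q(id) ≤ F_q(π) for every permutation π of {1,…,n}. -/
/-- Cyclic shift: the city `p` steps after position `i` in the circular order on `Fin n`. -/
def finShift {n : ℕ} (i : Fin n) (p : ℕ) : Fin n :=
  ⟨(i.val + p) % n, Nat.mod_lt _ i.pos⟩

/-- The `q`-stripe TSP objective: `∑_{p=1}^{q} ∑_{i=1}^{n} d(π(i), π(i+p))`,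
indices taken cyclically modulo `n`. -/
noncomputable def stripeObj (q : ℕ) {n : ℕ} (D : Fin n → Fin n → ℝ)
    (π : Equiv.Perm (Fin n)) : ℝ :=
  ∑ p ∈ Finset.Icc 1 q, ∑ i : Fin n, D (π i) (π (finShift i p))

/-- The fully crossing involution on `2q+2` points: `j ↦ j + (q+1) (mod 2q+2)`. -/
def crossShift (q : ℕ) (j : Fin (2*q+2)) : Fin (2*q+2) :=
  ⟨(j.val + (q+1)) % (2*q+2), Nat.mod_lt _ (by omega)⟩

/-- A symmetric matrix `D` is `q`-Kalmanson if for every choice of `2q+2` indices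
(in increasing order, via a strictly monotone `f`), the fully crossing matching has
maximum weight among all perfect matchings of these `2q+2` indices.  Perfect
matchings are encoded as fixed-point-free involutions `σ`; each matching weight is
counted twice in the sums below (once from each endpoint), which for symmetric `D`
is equivalent to comparing matching weights. -/
def qKalmanson (q : ℕ) {n : ℕ} (D : Fin n → Fin n → ℝ) : Prop :=
  ∀ f : Fin (2*q+2) → Fin n, StrictMono f →
    ∀ σ : Equiv.Perm (Fin (2*q+2)), (∀ j, σ (σ j) = j) → (∀ j, σ j ≠ j) →
      ∑ j : Fin (2*q+2), D (f j) (f (σ j)) ≤ ∑ j : Fin (2*q+2), D (f j) (f (crossShift q j))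

/-- The `q`-stripe objective for a sequence of natural-number cities. -/
noncomputable def tourLen (q : ℕ) (D : ℕ → ℕ → ℝ) (m : ℕ) (c : ℕ → ℕ) : ℝ :=
  ∑ p ∈ Finset.range q, ∑ i ∈ Finset.range m, D (c i) (c ((i + (p+1)) % m))

/-- Kalmanson property for matrices on `ℕ`, restricted to indices `< N`. -/
def natKal (q N : ℕ) (D : ℕ → ℕ → ℝ) : Prop :=
  ∀ f : Fin (2*q+2) → ℕ, StrictMono f → (∀ j, f j < N) →
    ∀ σ : Equiv.Perm (Fin (2*q+2)), (∀ j, σ (σ j) = j) → (∀ j, σ j ≠ j) →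
      ∑ j : Fin (2*q+2), D (f j) (f (σ j)) ≤ ∑ j : Fin (2*q+2), D (f j) (f (crossShift q j))

lemma crossShift_crossShift (q : ℕ) (j : Fin (2*q+2)) : crossShift q (crossShift q j) = j := by
  apply Fin.ext
  simp only [crossShift]
  have := j.isLt
  rcases lt_or_ge j.val (q+1) with h | h
  · rw [Nat.mod_eq_of_lt (show j.val + (q+1) < 2*q+2 by omega),
      show j.val + (q+1) + (q+1) = j.val + (2*q+2) by ring, Nat.add_mod_right,
      Nat.mod_eq_of_lt this]
  · rw [show j.val + (q+1) = (j.val - (q+1)) + (2*q+2) by omega, Nat.add_mod_right,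
      Nat.mod_eq_of_lt (show j.val - (q+1) < 2*q+2 by omega),
      Nat.mod_eq_of_lt (show j.val - (q+1) + (q+1) < 2*q+2 by omega)]
    omega

lemma cross_val_lo (q : ℕ) (j : Fin (2*q+2)) (h : j.val < q+1) :
    (crossShift q j).val = j.val + (q+1) := by
  simp only [crossShift]
  exact Nat.mod_eq_of_lt (by omega)

lemma cross_val_hi (q : ℕ) (j : Fin (2*q+2)) (h : q+1 ≤ j.val) :
    (crossShift q j).val = j.val - (q+1) := by
  simp only [crossShift]
  have := j.isLt
  rw [show j.val + (q+1) = (j.val - (q+1)) + (2*q+2) by omega, Nat.add_mod_right]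
  exact Nat.mod_eq_of_lt (by omega)

lemma cross_ne (q : ℕ) (j : Fin (2*q+2)) : crossShift q j ≠ j := by
  intro h
  have h' := congrArg Fin.val h
  rcases lt_or_ge j.val (q+1) with h1 | h1
  · rw [cross_val_lo q j h1] at h'; omega
  · rw [cross_val_hi q j h1] at h'; omega

/-- The crossing weight of a labelled family. -/
noncomputable def crossW (q : ℕ) (D : ℕ → ℕ → ℝ) (g : Fin (2*q+2) → ℕ) : ℝ :=
  ∑ j : Fin (2*q+2), D (g j) (g (crossShift q j))

lemma crossW_le_sorted (q N : ℕ) (D : ℕ → ℕ → ℝ) (hK : natKal q N D)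
    (f g : Fin (2*q+2) → ℕ) (hf : StrictMono f) (hfN : ∀ j, f j < N)
    (hg : Function.Injective g) (hr : Set.range f = Set.range g) :
    crossW q D g ≤ crossW q D f := by
  let e : Fin (2*q+2) ≃ Fin (2*q+2) :=
    ((Equiv.ofInjective f hf.injective).trans (Equiv.setCongr hr)).trans
      (Equiv.ofInjective g hg).symm
  have he : ∀ j, g (e j) = f j := by
    intro j
    have := Equiv.apply_ofInjective_symm hg
      ((Equiv.setCongr hr) ((Equiv.ofInjective f hf.injective) j))
    simpa [e] using this
  let τ : Equiv.Perm (Fin (2*q+2)) :=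
    ⟨crossShift q, crossShift q, crossShift_crossShift q, crossShift_crossShift q⟩
  let σ : Equiv.Perm (Fin (2*q+2)) := (e.trans τ).trans e.symm
  have hσ : ∀ j, σ j = e.symm (crossShift q (e j)) := fun j => rfl
  have h := hK f hf hfN σ (by intro j; simp [hσ, crossShift_crossShift])
    (by
      intro j hj
      rw [hσ, Equiv.symm_apply_eq] at hj
      exact cross_ne q _ hj)
  refine le_trans (le_of_eq ?_) h
  unfold crossW
  rw [← Equiv.sum_comp e]
  refine Finset.sum_congr rfl fun j _ => ?_
  rw [he, hσ, ← he (e.symm _), Equiv.apply_symm_apply]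

lemma strictMono_gap {n : ℕ} (f : Fin n → ℕ) (hf : StrictMono f) (i : Fin n) :
    ∀ k (h : i.val + k < n), f i + k ≤ f ⟨i.val + k, h⟩ := by
  intro k
  induction k with
  | zero => intro h; simp
  | succ k ih =>
    intro h
    have h1 := ih (by omega)
    have h2 : f ⟨i.val + k, by omega⟩ < f ⟨i.val + (k+1), h⟩ := hf (by
      rw [Fin.lt_def]; simp)
    omega

/-- The canonical outer family attached to a sequence. -/
def outer (q m : ℕ) (c : ℕ → ℕ) (k : Fin (2*q+2)) : ℕ :=
  if k.val ≤ q then c k.val else c (m + k.val - (2*q+1))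

lemma crossW_congr_mid (q m : ℕ) (D : ℕ → ℕ → ℝ)
    (h0 : ∀ i < m, D i m = 0) (h0' : ∀ i < m, D m i = 0)
    (f g : Fin (2*q+2) → ℕ) (hfl : f ⟨2*q+1, by omega⟩ = m) (hfm : f ⟨q, by omega⟩ < m)
    (hgm : g ⟨q, by omega⟩ < m)
    (h : ∀ k : Fin (2*q+2), k.val ≠ q → g k = f k) :
    crossW q D g = crossW q D f := by
  unfold crossW
  have hgl : g ⟨2*q+1, by omega⟩ = m := by
    rw [h _ (by simp; omega), hfl]
  refine Finset.sum_congr rfl fun j _ => ?_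
  by_cases h1 : j.val = q
  · have hc : crossShift q j = ⟨2*q+1, by omega⟩ := by
      apply Fin.ext; rw [cross_val_lo q j (by omega)]; simp; omega
    have hj : j = ⟨q, by omega⟩ := Fin.ext h1
    rw [hc, hgl, hfl, hj, h0 _ hfm, h0 _ hgm]
  · by_cases h2 : j.val = 2*q+1
    · have hc : crossShift q j = ⟨q, by omega⟩ := by
        apply Fin.ext; rw [cross_val_hi q j (by omega)]; simp; omega
      have hj : j = ⟨2*q+1, by omega⟩ := Fin.ext h2
      have hgj : g j = m := by rw [hj]; exact hgl
      have hfj : f j = m := by rw [hj]; exact hfl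
      rw [hc, hgj, hfj, h0' _ hfm, h0' _ hgm]
    · rw [h j h1, h (crossShift q j)]
      have := j.isLt
      rcases lt_or_ge j.val (q+1) with h3 | h3
      · rw [cross_val_lo q j h3]; omega
      · rw [cross_val_hi q j h3]; omega

lemma climb (q m : ℕ) (hm : 2*q+1 ≤ m) (D : ℕ → ℕ → ℝ) (hK : natKal q (m+1) D)
    (h0 : ∀ i < m, D i m = 0) (h0' : ∀ i < m, D m i = 0) :
    ∀ (N : ℕ) (f : Fin (2*q+2) → ℕ), StrictMono f → f ⟨2*q+1, by omega⟩ = m →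
      (((Finset.range m).filter (fun x => (x < q ∨ m - q ≤ x) ∧ x ∉ Set.range f)).card ≤ N) →
      crossW q D f ≤ crossW q D (outer q m id) := by
  classical
  intro N
  induction N with
  | zero =>
    intro f hf hfl hN
    have hall : ∀ x < m, (x < q ∨ m - q ≤ x) → ∃ k, f k = x := by
      intro x hx hx'
      by_contra hne
      have : x ∈ (Finset.range m).filter
          (fun x => (x < q ∨ m - q ≤ x) ∧ x ∉ Set.range f) := by
        simp only [Finset.mem_filter, Finset.mem_range]
        exact ⟨hx, hx', hne⟩
      have h2 := Finset.card_pos.mpr ⟨x, this⟩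
      omega
    have hlow : ∀ k : Fin (2*q+2), k.val ≤ f k := by
      intro k
      have h1 := strictMono_gap f hf ⟨0, by omega⟩ k.val (by simp)
      simp only [zero_add] at h1
      exact le_trans (by omega) h1
    have hup : ∀ k : Fin (2*q+2), f k + (2*q+1 - k.val) ≤ m := by
      intro k
      have h1 := strictMono_gap f hf k (2*q+1 - k.val) (by have := k.isLt; omega)
      have h2 : (⟨k.val + (2*q+1 - k.val), by have := k.isLt; omega⟩ : Fin (2*q+2))
          = ⟨2*q+1, by omega⟩ := Fin.ext (by have := k.isLt; simp; omega)
      rw [h2, hfl] at h1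
      exact h1
    have hL : ∀ j (h : j < q), f ⟨j, by omega⟩ = j := by
      intro j
      induction j using Nat.strong_induction_on with
      | _ j ih =>
        intro h
        obtain ⟨k, hk⟩ := hall j (by omega) (Or.inl h)
        have h1 := hlow k
        rcases Nat.lt_or_ge k.val j with h2 | h2
        · have h3 := ih k.val h2 (by omega)
          have h4 : f k = k.val := h3
          omega
        · have h5 : k = ⟨j, by omega⟩ := Fin.ext (by simp; omega)
          rw [← h5, hk]
    have hU : ∀ j (h : j ≤ q), f ⟨2*q+1-j, by omega⟩ = m - j := by
      intro j
      induction j using Nat.strong_induction_on with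
      | _ j ih =>
        intro h
        rcases Nat.eq_zero_or_pos j with h00 | h00
        · subst h00; simpa using hfl
        obtain ⟨k, hk⟩ := hall (m - j) (by omega) (Or.inr (by omega))
        have h1 := hup k
        have hkl := k.isLt
        rcases Nat.lt_or_ge (2*q+1-k.val) j with h2 | h2
        · have h3 := ih (2*q+1-k.val) h2 (by omega)
          have h5 : (⟨2*q+1-(2*q+1-k.val), by omega⟩ : Fin (2*q+2)) = k :=
            Fin.ext (by simp; omega)
          rw [h5] at h3
          omega
        · have h5 : k = ⟨2*q+1-j, by omega⟩ := Fin.ext (by simp; omega)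
          rw [← h5, hk]
    apply le_of_eq
    symm
    have hmid := hup ⟨q, by omega⟩
    simp only at hmid
    apply crossW_congr_mid q m D h0 h0' f _ hfl
    · omega
    · simp [outer]; omega
    · intro k hk
      have hkl := k.isLt
      unfold outer
      split_ifs with h1
      · exact (hL k.val (by omega)).symm
      · have h3 := hU (2*q+1-k.val) (by omega)
        have h5 : (⟨2*q+1-(2*q+1-k.val), by omega⟩ : Fin (2*q+2)) = k :=
            Fin.ext (by simp; omega)
        rw [h5] at h3
        rw [h3]; simp only [id]; omega
  | succ N ih =>
    intro f hf hfl hN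
    by_cases hex : ∃ y, y < m ∧ (y < q ∨ m - q ≤ y) ∧ y ∉ Set.range f
    swap
    · apply ih f hf hfl
      rw [Finset.card_eq_zero.mpr]
      · omega
      · rw [Finset.filter_eq_empty_iff]
        intro x hx hx'
        exact hex ⟨x, Finset.mem_range.mp hx, hx'⟩
    obtain ⟨y, hym, hyq, hyf⟩ := hex
    have hmidL : q ≤ f ⟨q, by omega⟩ := by
      have h1 := strictMono_gap f hf ⟨0, by omega⟩ q (by simp; omega)
      simp only [zero_add] at h1
      omega
    have hmidU : f ⟨q, by omega⟩ + (q+1) ≤ m := by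
      have h1 := strictMono_gap f hf ⟨q, by omega⟩ (q+1) (by simp; omega)
      have h2 : (⟨q + (q+1), by omega⟩ : Fin (2*q+2)) = ⟨2*q+1, by omega⟩ :=
        Fin.ext (by simp; omega)
      simp only at h1
      rw [h2, hfl] at h1
      exact h1
    let g : Fin (2*q+2) → ℕ := Function.update f ⟨q, by omega⟩ y
    have hgq : g ⟨q, by omega⟩ = y := by simp [g]
    have hgne : ∀ k : Fin (2*q+2), k.val ≠ q → g k = f k := by
      intro k hk
      apply Function.update_of_ne
      intro h; exact hk (congrArg Fin.val h)
    have hginj : Function.Injective g := by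
      intro a b hab
      by_cases ha : a.val = q <;> by_cases hb : b.val = q
      · exact Fin.ext (by omega)
      · have : a = ⟨q, by omega⟩ := Fin.ext ha
        rw [this, hgq, hgne b hb] at hab
        exact absurd ⟨b, hab.symm⟩ hyf
      · have : b = ⟨q, by omega⟩ := Fin.ext hb
        rw [this, hgq, hgne a ha] at hab
        exact absurd ⟨a, hab⟩ hyf
      · rw [hgne a ha, hgne b hb] at hab
        exact hf.injective hab
    have hgle : ∀ k, g k ≤ m := by
      intro k
      by_cases hk : k.val = q
      · have : k = ⟨q, by omega⟩ := Fin.ext hk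
        rw [this, hgq]; omega
      · rw [hgne k hk, ← hfl]
        apply hf.monotone
        rw [Fin.le_def]; have := k.isLt; simp; omega
    have hcard : (Finset.univ.image g).card = 2*q+2 := by
      rw [Finset.card_image_of_injective _ hginj]; simp
    let f' : Fin (2*q+2) → ℕ := (Finset.univ.image g).orderEmbOfFin hcard
    have hf' : StrictMono f' := ((Finset.univ.image g).orderEmbOfFin hcard).strictMono
    have hr : Set.range f' = Set.range g := by
      have := Finset.range_orderEmbOfFin (Finset.univ.image g) hcard
      simp only [f']
      rw [this]; simp
    have hf'le : ∀ k, f' k ≤ m := by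
      intro k
      have : f' k ∈ Set.range g := hr ▸ ⟨k, rfl⟩
      obtain ⟨j, hj⟩ := this
      rw [← hj]; exact hgle j
    have hgl : g ⟨2*q+1, by omega⟩ = m := by rw [hgne _ (by simp; omega), hfl]
    have hf'l : f' ⟨2*q+1, by omega⟩ = m := by
      have : m ∈ Set.range f' := hr ▸ ⟨_, hgl⟩
      obtain ⟨j, hj⟩ := this
      apply le_antisymm (hf'le _)
      rw [← hj]
      apply hf'.monotone
      rw [Fin.le_def]; have := j.isLt; simp; omega
    have e1 : crossW q D g = crossW q D f :=
      crossW_congr_mid q m D h0 h0' f g hfl (by omega) (by rw [hgq]; exact hym) hgne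
    have e2 : crossW q D g ≤ crossW q D f' :=
      crossW_le_sorted q (m+1) D hK f' g hf' (fun j => by have := hf'le j; omega) hginj hr
    rw [← e1]
    refine le_trans e2 (ih f' hf' hf'l ?_)
    have hlt : ((Finset.range m).filter
        (fun x => (x < q ∨ m - q ≤ x) ∧ x ∉ Set.range f')).card <
        ((Finset.range m).filter
        (fun x => (x < q ∨ m - q ≤ x) ∧ x ∉ Set.range f)).card := by
      apply Finset.card_lt_card
      rw [Finset.ssubset_iff_of_subset]
      · refine ⟨y, ?_, ?_⟩
        · simp only [Finset.mem_filter, Finset.mem_range]; exact ⟨hym, hyq, hyf⟩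
        · simp only [Finset.mem_filter, Finset.mem_range, not_and, not_not]
          intro _ _
          rw [hr]; exact ⟨_, hgq⟩
      · intro x hx
        simp only [Finset.mem_filter, Finset.mem_range] at hx ⊢
        refine ⟨hx.1, hx.2.1, ?_⟩
        rintro ⟨k, hk⟩
        apply hx.2.2
        rw [hr]
        refine ⟨k, ?_⟩
        rw [hgne k, hk]
        intro hkq
        have : k = ⟨q, by omega⟩ := Fin.ext hkq
        rw [this] at hk
        have := hx.2.1
        omega
    omega

lemma crossW_outer (q m : ℕ) (D : ℕ → ℕ → ℝ) (hs : ∀ i j, D i j = D j i) (c : ℕ → ℕ)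
    (hm : 2*q+1 ≤ m) :
    crossW q D (outer q m c) =
      2 * (∑ j ∈ Finset.range q, D (c (m - q + j)) (c j) + D (c m) (c q)) := by
  let g : ℕ → ℕ := fun k => if k ≤ q then c k else c (m + k - (2*q+1))
  have h1 : crossW q D (outer q m c) =
      ∑ i ∈ Finset.range (2*q+2), D (g i) (g ((i + (q+1)) % (2*q+2))) := by
    rw [← Fin.sum_univ_eq_sum_range (fun i => D (g i) (g ((i + (q+1)) % (2*q+2))))]
    rfl
  have hA : ∀ i ∈ Finset.range (q+1), D (g i) (g ((i + (q+1)) % (2*q+2)))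
      = D (c (m - q + i)) (c i) := by
    intro i hi
    rw [Finset.mem_range] at hi
    rw [Nat.mod_eq_of_lt (by omega), hs]
    simp only [g]
    rw [if_neg (by omega), if_pos (by omega)]
    congr 2; omega
  have hB : ∀ i ∈ Finset.range (q+1),
      D (g (q+1+i)) (g ((q+1+i + (q+1)) % (2*q+2)))
      = D (c (m - q + i)) (c i) := by
    intro i hi
    rw [Finset.mem_range] at hi
    rw [show q+1+i+(q+1) = i + (2*q+2) by ring, Nat.add_mod_right, Nat.mod_eq_of_lt (by omega)]
    simp only [g]
    rw [if_neg (by omega), if_pos (by omega)]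
    congr 2; omega
  rw [h1, show 2*q+2 = (q+1)+(q+1) by ring, Finset.sum_range_add]
  rw [show (q+1)+(q+1) = 2*q+2 by ring, Finset.sum_congr rfl hA, Finset.sum_congr rfl hB,
    Finset.sum_range_succ, show m - q + q = m by omega]
  ring

lemma key_ineq (q m : ℕ) (hm : 2*q+1 ≤ m) (D : ℕ → ℕ → ℝ) (hs : ∀ i j, D i j = D j i)
    (hK : natKal q (m+1) D) (h0 : ∀ i < m, D i m = 0)
    (c : ℕ → ℕ) (hc : ∀ i < m, c i < m) (hinj : ∀ i < m, ∀ j < m, c i = c j → i = j)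
    (hcm : c m = m) :
    ∑ j ∈ Finset.range q, D (c (m - q + j)) (c j) ≤
      ∑ j ∈ Finset.range q, D (m - q + j) j := by
  classical
  have h0' : ∀ i < m, D m i = 0 := fun i hi => by rw [hs, h0 i hi]
  have hc1 : ∀ i ≤ m, c i ≤ m := by
    intro i hi
    rcases Nat.lt_or_ge i m with h | h
    · exact (hc i h).le
    · rw [show i = m by omega, hcm]
  have hinj1 : ∀ i ≤ m, ∀ j ≤ m, c i = c j → i = j := by
    intro i hi j hj hij
    rcases Nat.lt_or_ge i m with h | h <;> rcases Nat.lt_or_ge j m with h' | h'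
    · exact hinj i h j h' hij
    · have := hc i h
      rw [show j = m by omega, hcm] at hij; omega
    · have := hc j h'
      rw [show i = m by omega, hcm] at hij; omega
    · omega
  let g := outer q m c
  have hgle : ∀ k, g k ≤ m := by
    intro k
    have := k.isLt
    simp only [g, outer]
    split_ifs with h
    · exact hc1 _ (by omega)
    · exact hc1 _ (by omega)
  have hginj : Function.Injective g := by
    intro a b hab
    have := a.isLt
    have := b.isLt
    apply Fin.ext
    simp only [g, outer] at hab
    split_ifs at hab with h h' h'
    all_goals
      have := hinj1 _ (by omega) _ (by omega) hab
      omega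
  have hcard : (Finset.univ.image g).card = 2*q+2 := by
    rw [Finset.card_image_of_injective _ hginj]; simp
  let f' : Fin (2*q+2) → ℕ := (Finset.univ.image g).orderEmbOfFin hcard
  have hf' : StrictMono f' := ((Finset.univ.image g).orderEmbOfFin hcard).strictMono
  have hr : Set.range f' = Set.range g := by
    have := Finset.range_orderEmbOfFin (Finset.univ.image g) hcard
    simp only [f']
    rw [this]; simp
  have hf'le : ∀ k, f' k ≤ m := by
    intro k
    have : f' k ∈ Set.range g := hr ▸ ⟨k, rfl⟩
    obtain ⟨j, hj⟩ := this
    rw [← hj]; exact hgle j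
  have hgl : g ⟨2*q+1, by omega⟩ = m := by
    simp only [g, outer]
    rw [if_neg (by omega), show m + (2*q+1) - (2*q+1) = m by omega, hcm]
  have hf'l : f' ⟨2*q+1, by omega⟩ = m := by
    have : m ∈ Set.range f' := hr ▸ ⟨_, hgl⟩
    obtain ⟨j, hj⟩ := this
    apply le_antisymm (hf'le _)
    rw [← hj]
    apply hf'.monotone
    rw [Fin.le_def]; have := j.isLt; simp; omega
  have e2 : crossW q D g ≤ crossW q D f' :=
    crossW_le_sorted q (m+1) D hK f' g hf' (fun j => by have := hf'le j; omega) hginj hr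
  have e3 := climb q m hm D hK h0 h0' _ f' hf' hf'l le_rfl
  have e4 := le_trans e2 e3
  simp only [g] at e4
  rw [crossW_outer q m D hs c hm, crossW_outer q m D hs id hm, hcm, h0' _ (hc q (by omega))] at e4
  simp only [id] at e4
  rw [h0' q (by omega)] at e4
  linarith

lemma sum_cyc (m : ℕ) (h : ℕ → ℝ) (k : ℕ) :
    ∑ i ∈ Finset.range m, h ((i + k) % m) = ∑ i ∈ Finset.range m, h i := by
  induction k with
  | zero =>
    refine Finset.sum_congr rfl fun i hi => ?_
    rw [add_zero, Nat.mod_eq_of_lt (Finset.mem_range.mp hi)]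
  | succ k ih =>
    rw [← ih]
    rcases m with _ | m
    · simp
    · rw [Finset.sum_range_succ, Finset.sum_range_succ' (fun i => h ((i + k) % (m+1)))]
      congr 1
      · refine Finset.sum_congr rfl fun i _ => ?_
        congr 2; ring_nf
      · rw [show m + (k+1) = (0 + k) + (m+1) by ring, Nat.add_mod_right]

lemma tourLen_rot (q m : ℕ) (D : ℕ → ℕ → ℝ) (c : ℕ → ℕ) (k : ℕ) :
    tourLen q D m (fun i => c ((i + k) % m)) = tourLen q D m c := by
  unfold tourLen
  refine Finset.sum_congr rfl fun p _ => ?_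
  rw [← sum_cyc m (fun i => D (c i) (c ((i + (p+1)) % m))) k]
  refine Finset.sum_congr rfl fun i _ => ?_
  congr 2
  simp only [Nat.mod_add_mod]
  congr 1; ring_nf

lemma sum_split (m p : ℕ) (hp : p ≤ m) (D : ℕ → ℕ → ℝ) (c : ℕ → ℕ) :
    ∑ i ∈ Finset.range m, D (c i) (c ((i + p) % m)) =
      ∑ i ∈ Finset.range (m - p), D (c i) (c (i + p)) +
      ∑ j ∈ Finset.range p, D (c (m - p + j)) (c j) := by
  obtain ⟨r, rfl⟩ := Nat.exists_eq_add_of_le' hp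
  rw [Finset.sum_range_add, Nat.add_sub_cancel]
  congr 1
  · refine Finset.sum_congr rfl fun i hi => ?_
    rw [Finset.mem_range] at hi
    rw [Nat.mod_eq_of_lt (by omega)]
  · refine Finset.sum_congr rfl fun i hi => ?_
    rw [Finset.mem_range] at hi
    rw [show r + i + p = i + (r + p) by ring, Nat.add_mod_right, Nat.mod_eq_of_lt (by omega)]

lemma tourLen_succ (m : ℕ) (D : ℕ → ℕ → ℝ) (c : ℕ → ℕ)
    (h0 : ∀ i < m, D (c i) (c m) = 0) (h0' : ∀ i < m, D (c m) (c i) = 0) (q : ℕ) (hq : q < m) :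
    tourLen q D (m+1) c = tourLen q D m c -
      ∑ j ∈ Finset.range q, D (c (m - q + j)) (c j) := by
  induction q with
  | zero => simp [tourLen]
  | succ q ih =>
    have ih' := ih (by omega)
    unfold tourLen at ih' ⊢
    rw [Finset.sum_range_succ _ q, ih', Finset.sum_range_succ _ q,
      sum_split (m+1) (q+1) (by omega), sum_split m (q+1) (by omega)]
    rw [show m + 1 - (q+1) = (m - (q+1)) + 1 by omega, Finset.sum_range_succ _ (m - (q+1)),
      show m - (q+1) + (q+1) = m by omega, h0 _ (by omega),
      show m - (q+1) + 1 = m - q by omega,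
      Finset.sum_range_succ (fun j => D (c (m - q + j)) (c j)),
      show m - q + q = m by omega, h0' _ (by omega)]
    ring

lemma sum_comp_inj (m : ℕ) (c : ℕ → ℕ) (hc : ∀ i < m, c i < m)
    (hinj : ∀ i < m, ∀ j < m, c i = c j → i = j) (h : ℕ → ℝ) :
    ∑ i ∈ Finset.range m, h (c i) = ∑ i ∈ Finset.range m, h i := by
  classical
  have himg : (Finset.range m).image c = Finset.range m := by
    apply Finset.eq_of_subset_of_card_le
    · intro x hx
      simp only [Finset.mem_image, Finset.mem_range] at hx ⊢
      obtain ⟨i, hi, rfl⟩ := hx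
      exact hc i hi
    · rw [Finset.card_image_of_injOn]
      intro i hi j hj
      simp only [Finset.coe_range, Set.mem_Iio] at hi hj
      exact hinj i hi j hj
  conv_rhs => rw [← himg]
  rw [Finset.sum_image]
  intro i hi j hj
  simp only [Finset.coe_range, Set.mem_Iio] at hi hj
  exact hinj i hi j hj

lemma tourLen_base (q : ℕ) (D : ℕ → ℕ → ℝ) (hs : ∀ i j, D i j = D j i) (c : ℕ → ℕ) :
    2 * tourLen q D (2*q+1) c =
      ∑ i ∈ Finset.range (2*q+1), ∑ j ∈ Finset.range (2*q+1), D (c i) (c j)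
      - ∑ i ∈ Finset.range (2*q+1), D (c i) (c i) := by
  set n := 2*q+1 with hn
  let S : ℕ → ℝ := fun p => ∑ i ∈ Finset.range n, D (c i) (c ((i + p) % n))
  have hS0 : S 0 = ∑ i ∈ Finset.range n, D (c i) (c i) := by
    refine Finset.sum_congr rfl fun i hi => ?_
    rw [add_zero, Nat.mod_eq_of_lt (Finset.mem_range.mp hi)]
  have hsymS : ∀ p ≤ n, S p = S (n - p) := by
    intro p hp
    simp only [S]
    rw [← sum_cyc n (fun i => D (c i) (c ((i + (n - p)) % n))) p]
    refine Finset.sum_congr rfl fun i hi => ?_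
    rw [Nat.mod_add_mod, show i + p + (n - p) = i + n by omega, Nat.add_mod_right,
      Nat.mod_eq_of_lt (Finset.mem_range.mp hi), hs]
  have htot : ∑ p ∈ Finset.range n, S p =
      ∑ i ∈ Finset.range n, ∑ j ∈ Finset.range n, D (c i) (c j) := by
    simp only [S]
    rw [Finset.sum_comm]
    refine Finset.sum_congr rfl fun i _ => ?_
    rw [← sum_cyc n (fun j => D (c i) (c j)) i]
    refine Finset.sum_congr rfl fun p _ => ?_
    rw [add_comm]
  have hT : tourLen q D n c = ∑ p ∈ Finset.range q, S (p+1) := rfl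
  have hsplit : ∑ p ∈ Finset.range n, S p =
      ∑ p ∈ Finset.range q, S (p+1) + ∑ p ∈ Finset.range q, S (q + p + 1) + S 0 := by
    rw [hn, Finset.sum_range_succ', two_mul, Finset.sum_range_add]
  have hrefl : ∑ p ∈ Finset.range q, S (q + p + 1) = ∑ p ∈ Finset.range q, S (p+1) := by
    rw [← Finset.sum_range_reflect]
    refine Finset.sum_congr rfl fun p hp => ?_
    rw [Finset.mem_range] at hp
    rw [hsymS _ (by omega)]
    congr 1; omega
  rw [← htot, ← hS0, hsplit, hrefl, hT]
  ring

lemma sum_affine (q m : ℕ) (D : ℕ → ℕ → ℝ) (a : ℕ → ℝ) (c : ℕ → ℕ) (hc : ∀ i < m, c i < m)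
    (hinj : ∀ i < m, ∀ j < m, c i = c j → i = j) :
    tourLen q (fun i j => D i j - a i - a j) m c =
      tourLen q D m c - q * (2 * ∑ i ∈ Finset.range m, a i) := by
  unfold tourLen
  have h : ∀ p ∈ Finset.range q,
      ∑ i ∈ Finset.range m, (D (c i) (c ((i + (p+1)) % m)) - a (c i) - a (c ((i + (p+1)) % m)))
      = ∑ i ∈ Finset.range m, D (c i) (c ((i + (p+1)) % m)) - 2 * ∑ i ∈ Finset.range m, a i := by
    intro p _
    rw [Finset.sum_sub_distrib, Finset.sum_sub_distrib, sum_comp_inj m c hc hinj a,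
      sum_cyc m (fun i => a (c i)) (p+1), sum_comp_inj m c hc hinj a]
    ring
  rw [Finset.sum_congr rfl h, Finset.sum_sub_distrib]
  simp

lemma natKal_affine (q N : ℕ) (D : ℕ → ℕ → ℝ) (a : ℕ → ℝ) (hK : natKal q N D) :
    natKal q N (fun i j => D i j - a i - a j) := by
  intro f hf hfN σ h1 h2
  have h := hK f hf hfN σ h1 h2
  let τ : Equiv.Perm (Fin (2*q+2)) :=
    ⟨crossShift q, crossShift q, crossShift_crossShift q, crossShift_crossShift q⟩
  have e1 : ∑ j, a (f (σ j)) = ∑ j, a (f j) := Equiv.sum_comp σ (fun j => a (f j))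
  have e2 : ∑ j, a (f (crossShift q j)) = ∑ j, a (f j) := Equiv.sum_comp τ (fun j => a (f j))
  simp only [Finset.sum_sub_distrib]
  rw [e1, e2]
  linarith

lemma nat_main (q : ℕ) : ∀ (m : ℕ), 2*q+1 ≤ m → ∀ (D : ℕ → ℕ → ℝ), (∀ i j, D i j = D j i) →
    natKal q m D → ∀ c : ℕ → ℕ, (∀ i < m, c i < m) →
    (∀ i < m, ∀ j < m, c i = c j → i = j) →
    tourLen q D m id ≤ tourLen q D m c := by
  intro m hm
  induction m, hm using Nat.le_induction with
  | base =>
    intro D hs _ c hc hinj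
    have h1 := tourLen_base q D hs c
    have h2 := tourLen_base q D hs id
    simp only [id] at h2
    have h3 := sum_comp_inj _ c hc hinj (fun i => D i i)
    have h4 : ∑ i ∈ Finset.range (2*q+1), ∑ j ∈ Finset.range (2*q+1), D (c i) (c j) =
        ∑ i ∈ Finset.range (2*q+1), ∑ j ∈ Finset.range (2*q+1), D i j := by
      rw [← sum_comp_inj _ c hc hinj (fun i => ∑ j ∈ Finset.range (2*q+1), D i j)]
      refine Finset.sum_congr rfl fun i _ => ?_
      exact sum_comp_inj _ c hc hinj (fun j => D (c i) j)
    have h5 : tourLen q D (2*q+1) id = tourLen q D (2*q+1) c := by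
      linarith
    exact h5.le
  | succ m hm ih =>
    intro D hs hK c hc hinj
    classical
    -- rotate so that the last city is `m`
    have hsurj : ∃ k < m + 1, c k = m := by
      by_contra hne
      push Not at hne
      have hmap : ∀ i ∈ Finset.range (m+1), c i ∈ Finset.range m := by
        intro i hi
        rw [Finset.mem_range] at hi ⊢
        have := hc i hi
        have := hne i hi
        omega
      obtain ⟨x, hx, y, hy, hxy, he⟩ :=
        Finset.exists_ne_map_eq_of_card_lt_of_maps_to (by simp) hmap
      exact hxy (hinj x (Finset.mem_range.mp hx) y (Finset.mem_range.mp hy) he)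
    obtain ⟨k, hk, hck⟩ := hsurj
    let c' : ℕ → ℕ := fun i => c ((i + (k+1)) % (m+1))
    have hc'm : c' m = m := by
      simp only [c']
      rw [show m + (k+1) = k + (m+1) by ring, Nat.add_mod_right, Nat.mod_eq_of_lt hk, hck]
    have hc' : ∀ i < m+1, c' i < m+1 := fun i _ => hc _ (Nat.mod_lt _ (by omega))
    have hinj' : ∀ i < m+1, ∀ j < m+1, c' i = c' j → i = j := by
      intro i hi j hj hij
      have h := hinj _ (Nat.mod_lt _ (by omega)) _ (Nat.mod_lt _ (by omega)) hij
      have h2 : i ≡ j [MOD m+1] := Nat.ModEq.add_right_cancel' (k+1) h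
      exact Nat.ModEq.eq_of_lt_of_lt h2 hi hj
    rw [← tourLen_rot q (m+1) D c (k+1)]
    change tourLen q D (m+1) id ≤ tourLen q D (m+1) c'
    let a : ℕ → ℝ := fun i => if i = m then 0 else D i m
    let E : ℕ → ℕ → ℝ := fun i j => D i j - a i - a j
    have hE : ∀ c : ℕ → ℕ, (∀ i < m+1, c i < m+1) →
        (∀ i < m+1, ∀ j < m+1, c i = c j → i = j) →
        tourLen q E (m+1) c = tourLen q D (m+1) c - q * (2 * ∑ i ∈ Finset.range (m+1), a i) :=
      fun c h1 h2 => sum_affine q (m+1) D a c h1 h2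
    have hEs : ∀ i j, E i j = E j i := by
      intro i j; simp only [E]; rw [hs i j]; ring
    have hEK : natKal q (m+1) E := natKal_affine q (m+1) D a hK
    have hE0 : ∀ i < m, E i m = 0 := by
      intro i hi
      simp [E, a, hi.ne]
    have hEKm : natKal q m E := fun f hf hfN => hEK f hf (fun j => by have := hfN j; omega)
    have hcm : ∀ i < m, c' i < m := by
      intro i hi
      have h1 := hc' i (by omega)
      have h2 : c' i ≠ m := by
        intro h
        have := hinj' i (by omega) m (by omega) (by rw [h, hc'm])
        omega
      omega
    have hinjm : ∀ i < m, ∀ j < m, c' i = c' j → i = j :=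
      fun i hi j hj => hinj' i (by omega) j (by omega)
    have k1 := ih E hEs hEKm c' hcm hinjm
    have k2 := key_ineq q m hm E hEs hEK hE0 c' hcm hinjm hc'm
    have k3 := tourLen_succ m E c' (fun i hi => by rw [hc'm]; exact hE0 _ (hcm i hi))
      (fun i hi => by rw [hc'm, hEs]; exact hE0 _ (hcm i hi)) q (by omega)
    have k4 := tourLen_succ m E id (fun i hi => hE0 i hi)
      (fun i hi => by rw [hEs]; exact hE0 i hi) q (by omega)
    have k5 := hE c' hc' hinj'
    have k6 := hE id (fun i hi => hi) (fun i _ j _ h => h)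
    simp only [id] at k4
    linarith

lemma stripe_eq (q n : ℕ) (D : Fin n → Fin n → ℝ) (D' : ℕ → ℕ → ℝ) (c : ℕ → ℕ)
    (π : Equiv.Perm (Fin n)) (hD : ∀ i j : Fin n, D' i j = D i j)
    (hc : ∀ i : Fin n, c i = π i) :
    stripeObj q D π = tourLen q D' n c := by
  unfold stripeObj tourLen
  rw [Finset.range_eq_Ico, Finset.sum_Ico_add' (fun p => ∑ i ∈ Finset.range n,
    D' (c i) (c ((i + p) % n))) 0 q 1]
  refine Finset.sum_congr ?_ fun p _ => ?_
  · ext x; simp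
  · rw [← Fin.sum_univ_eq_sum_range (fun i => D' (c i) (c ((i + p) % n))) n]
    refine Finset.sum_congr rfl fun i _ => ?_
    have h : c ((i.val + p) % n) = π (finShift i p) := hc (finShift i p)
    rw [h, hc i, hD]

/-- Theorem (main result): for `q ≥ 1` and a symmetric `q`-Kalmanson `n×n` matrix with
`n ≥ 2q+1`, the identity permutation minimizes the `q`-stripe TSP objective. -/
theorem qStripe_identity_optimal_of_qKalmanson
    (q n : ℕ) (hq : 1 ≤ q) (hn : 2*q+1 ≤ n)
    (D : Fin n → Fin n → ℝ) (hsymm : ∀ i j, D i j = D j i)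
    (hK : qKalmanson q D) (π : Equiv.Perm (Fin n)) :
    stripeObj q D (Equiv.refl (Fin n)) ≤ stripeObj q D π := by
  let D' : ℕ → ℕ → ℝ := fun i j => if h : i < n ∧ j < n then D ⟨i, h.1⟩ ⟨j, h.2⟩ else 0
  let c : ℕ → ℕ := fun i => if h : i < n then (π ⟨i, h⟩).val else 0
  have hD : ∀ i j : Fin n, D' i j = D i j := by intro i j; simp [D']
  have hc : ∀ i : Fin n, c i = π i := by intro i; simp [c]
  rw [stripe_eq q n D D' id (Equiv.refl _) hD (fun i => rfl), stripe_eq q n D D' c π hD hc]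
  apply nat_main q n hn D'
  · intro i j
    by_cases h : i < n ∧ j < n
    · have h1 := hD ⟨i, h.1⟩ ⟨j, h.2⟩
      have h2 := hD ⟨j, h.2⟩ ⟨i, h.1⟩
      simp only at h1 h2
      rw [h1, h2, hsymm]
    · have h' : ¬ (j < n ∧ i < n) := fun hh => h hh.symm
      simp only [D', dif_neg h, dif_neg h']
  · intro f hf hfN σ h1 h2
    have h := hK (fun j => ⟨f j, hfN j⟩) (fun a b hab => hf hab) σ h1 h2
    have e : ∀ a b, D' (f a) (f b) = D ⟨f a, hfN a⟩ ⟨f b, hfN b⟩ :=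
      fun a b => hD ⟨f a, hfN a⟩ ⟨f b, hfN b⟩
    simp only [e]
    exact h
  · intro i hi
    have := hc ⟨i, hi⟩
    simp only at this
    rw [this]; exact (π _).isLt
  · intro i hi j hj hij
    have h1 := hc ⟨i, hi⟩
    have h2 := hc ⟨j, hj⟩
    simp only at h1 h2
    rw [h1, h2] at hij
    have := π.injective (Fin.ext hij)
    simpa using this
end

section
/- For every integer q ≥ 1, every symmetric q-Kalmanson n×n real matrix is also a (q+1)-Kalmanson matrix. -/
lemma crossShift_val (q : ℕ) (j : Fin (2*q+2)) :
    (crossShift q j).val = if j.val < q+1 then j.val + (q+1) else j.val - (q+1) := by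
  have hj := j.isLt
  unfold crossShift
  split_ifs with h
  · exact Nat.mod_eq_of_lt (by omega)
  · show (j.val + (q+1)) % (2*q+2) = _
    rw [Nat.mod_eq_sub_mod (by omega), Nat.mod_eq_of_lt (by omega)]
    omega

/-- Increasing enumeration of the complement of `{a, b}`. -/
def skipTwo (q : ℕ) (a b : Fin (2*(q+1)+2)) (j : Fin (2*q+2)) : Fin (2*(q+1)+2) :=
  ⟨if j.val < a.val then j.val else if j.val + 1 < b.val then j.val + 1 else j.val + 2, by
    have := j.isLt
    split_ifs <;> omega⟩

/-- Rank of `p` in the complement of `{a, b}`. -/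
def rankTwo (q : ℕ) (a b : Fin (2*(q+1)+2)) (p : Fin (2*(q+1)+2)) : Fin (2*q+2) :=
  ⟨min (if p.val < a.val then p.val else if p.val < b.val then p.val - 1 else p.val - 2) (2*q+1), by
    omega⟩

lemma skip_rank (q : ℕ) (a b p : Fin (2*(q+1)+2)) (hab : a < b) (ha : p ≠ a) (hb : p ≠ b) :
    skipTwo q a b (rankTwo q a b p) = p := by
  have := a.isLt
  have := b.isLt
  have := p.isLt
  rw [Fin.lt_def] at hab
  rw [Ne, Fin.ext_iff] at ha hb
  apply Fin.ext
  simp only [skipTwo, rankTwo]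
  split_ifs <;> omega

lemma rank_skip (q : ℕ) (a b : Fin (2*(q+1)+2)) (j : Fin (2*q+2)) (hab : a < b) :
    rankTwo q a b (skipTwo q a b j) = j := by
  have := a.isLt
  have := b.isLt
  have := j.isLt
  rw [Fin.lt_def] at hab
  apply Fin.ext
  simp only [skipTwo, rankTwo]
  split_ifs <;> omega

lemma skip_ne (q : ℕ) (a b : Fin (2*(q+1)+2)) (j : Fin (2*q+2)) (hab : a < b) :
    skipTwo q a b j ≠ a ∧ skipTwo q a b j ≠ b := by
  rw [Fin.lt_def] at hab
  simp only [Ne, Fin.ext_iff, skipTwo]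
  constructor <;> split_ifs <;> omega

lemma skip_mono (q : ℕ) (a b : Fin (2*(q+1)+2)) (hab : a < b) :
    StrictMono (skipTwo q a b) := by
  intro i j hij
  rw [Fin.lt_def] at hab hij ⊢
  simp only [skipTwo]
  split_ifs <;> omega

/-- The matching `{a, b}` plus the crossing matching of the other points. -/
def tauFun (q : ℕ) (a b : Fin (2*(q+1)+2)) (p : Fin (2*(q+1)+2)) : Fin (2*(q+1)+2) :=
  if p = a then b else if p = b then a else skipTwo q a b (crossShift q (rankTwo q a b p))

lemma tau_skip (q : ℕ) (a b : Fin (2*(q+1)+2)) (hab : a < b) (j : Fin (2*q+2)) :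
    tauFun q a b (skipTwo q a b j) = skipTwo q a b (crossShift q j) := by
  obtain ⟨h1, h2⟩ := skip_ne q a b j hab
  simp only [tauFun, if_neg h1, if_neg h2, rank_skip q a b j hab]

lemma tau_a (q : ℕ) (a b : Fin (2*(q+1)+2)) : tauFun q a b a = b := by
  simp [tauFun]

lemma tau_b (q : ℕ) (a b : Fin (2*(q+1)+2)) (hab : a < b) : tauFun q a b b = a := by
  simp [tauFun, hab.ne']

lemma point_cases (q : ℕ) (a b p : Fin (2*(q+1)+2)) (hab : a < b) :
    p = a ∨ p = b ∨ ∃ j, p = skipTwo q a b j := by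
  by_cases h1 : p = a
  · exact Or.inl h1
  by_cases h2 : p = b
  · exact Or.inr (Or.inl h2)
  exact Or.inr (Or.inr ⟨_, (skip_rank q a b p hab h1 h2).symm⟩)

lemma tau_invol (q : ℕ) (a b : Fin (2*(q+1)+2)) (hab : a < b) :
    Function.Involutive (tauFun q a b) := by
  intro p
  rcases point_cases q a b p hab with h | h | ⟨j, h⟩
  · rw [h, tau_a, tau_b q a b hab]
  · rw [h, tau_b q a b hab, tau_a]
  · rw [h, tau_skip q a b hab, tau_skip q a b hab, crossShift_crossShift]

lemma tau_ne (q : ℕ) (a b : Fin (2*(q+1)+2)) (hab : a < b) (p : Fin (2*(q+1)+2)) :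
    tauFun q a b p ≠ p := by
  rcases point_cases q a b p hab with h | h | ⟨j, h⟩
  · rw [h, tau_a]; exact hab.ne'
  · rw [h, tau_b q a b hab]; exact hab.ne
  · rw [h, tau_skip q a b hab]
    exact fun h => cross_ne q j ((skip_mono q a b hab).injective h)

lemma sum_split_s1 (q : ℕ) (a b : Fin (2*(q+1)+2)) (hab : a < b) (g : Fin (2*(q+1)+2) → ℝ) :
    ∑ p, g p = g a + g b + ∑ j, g (skipTwo q a b j) := by
  classical
  have hu : (Finset.univ : Finset (Fin (2*(q+1)+2))) =
      insert a (insert b (Finset.univ.image (skipTwo q a b))) := by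
    ext p
    rcases point_cases q a b p hab with h | h | ⟨j, h⟩ <;> simp [h]
  rw [hu, Finset.sum_insert, Finset.sum_insert, Finset.sum_image, add_assoc]
  · exact (skip_mono q a b hab).injective.injOn
  · simp only [Finset.mem_image, Finset.mem_univ, true_and, not_exists]
    exact fun j => (skip_ne q a b j hab).2
  · simp only [Finset.mem_insert, Finset.mem_image, Finset.mem_univ, true_and, not_or, not_exists]
    exact ⟨hab.ne, fun j => (skip_ne q a b j hab).1⟩

/-- Fixing one edge of a matching and crossing the rest does not decrease the weight. -/
lemma exchange {q n : ℕ} {D : Fin n → Fin n → ℝ} (hK : qKalmanson q D)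
    (f : Fin (2*(q+1)+2) → Fin n) (hf : StrictMono f)
    (s : Fin (2*(q+1)+2) → Fin (2*(q+1)+2)) (hs : Function.Involutive s) (hne : ∀ j, s j ≠ j)
    (a b : Fin (2*(q+1)+2)) (hab : a < b) (h : s a = b) :
    ∑ j, D (f j) (f (s j)) ≤ ∑ j, D (f j) (f (tauFun q a b j)) := by
  have hb : s b = a := by rw [← h, hs]
  have key : ∀ j, skipTwo q a b (rankTwo q a b (s (skipTwo q a b j))) = s (skipTwo q a b j) := by
    intro j
    obtain ⟨h1, h2⟩ := skip_ne q a b j hab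
    apply skip_rank q a b _ hab
    · intro h3
      exact h2 (by rw [← hs (skipTwo q a b j), h3, h])
    · intro h3
      exact h1 (by rw [← hs (skipTwo q a b j), h3, hb])
  have hinv : Function.Involutive (fun j => rankTwo q a b (s (skipTwo q a b j))) := by
    intro j
    simp only [key]
    rw [hs, rank_skip q a b j hab]
  have := hK (f ∘ skipTwo q a b) (hf.comp (skip_mono q a b hab)) hinv.toPerm hinv (by
    intro j hj
    apply hne (skipTwo q a b j)
    rw [← key]
    exact congrArg _ hj)
  simp only [Function.comp, Function.Involutive.coe_toPerm, key] at this
  rw [sum_split_s1 q a b hab (fun j => D (f j) (f (s j))),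
    sum_split_s1 q a b hab (fun j => D (f j) (f (tauFun q a b j)))]
  simp only [h, hb, tau_a, tau_b q a b hab, tau_skip q a b hab]
  linarith

lemma tau_val (q : ℕ) (a b p : Fin (2*(q+1)+2)) (ha : p.val ≠ a.val) (hb : p.val ≠ b.val) :
    (tauFun q a b p) = skipTwo q a b (crossShift q (rankTwo q a b p)) := by
  have ha' : p ≠ a := fun h => ha (congrArg _ h)
  have hb' : p ≠ b := fun h => hb (congrArg _ h)
  simp only [tauFun, if_neg ha', if_neg hb']

/-- A matching containing an antipodal edge. -/
lemma step_antipodal {q n : ℕ} {D : Fin n → Fin n → ℝ} (hK : qKalmanson q D)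
    (f : Fin (2*(q+1)+2) → Fin n) (hf : StrictMono f)
    (s : Fin (2*(q+1)+2) → Fin (2*(q+1)+2)) (hs : Function.Involutive s) (hne : ∀ j, s j ≠ j)
    (c : Fin (2*(q+1)+2)) (hc : s c = crossShift (q+1) c) :
    ∑ j, D (f j) (f (s j)) ≤ ∑ j, D (f j) (f (crossShift (q+1) j)) := by
  obtain ⟨a, b, hab, h, hv⟩ : ∃ a b, a < b ∧ s a = b ∧ b.val = a.val + (q+2) := by
    have hcv := crossShift_val (q+1) c
    have := c.isLt
    by_cases h : c.val < q+2
    · rw [if_pos h] at hcv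
      exact ⟨c, _, by rw [Fin.lt_def]; omega, hc, hcv⟩
    · rw [if_neg h] at hcv
      exact ⟨crossShift (q+1) c, c, by rw [Fin.lt_def]; omega, by rw [← hc, hs], by omega⟩
  have ht : tauFun q a b = crossShift (q+1) := by
    have h2 := b.isLt
    funext p
    have h3 := p.isLt
    apply Fin.ext
    by_cases h4 : p.val = a.val
    · rw [Fin.ext h4, tau_a, crossShift_val]
      split_ifs <;> omega
    by_cases h5 : p.val = b.val
    · rw [Fin.ext h5, tau_b q a b hab, crossShift_val]
      split_ifs <;> omega
    rw [tau_val q a b p h4 h5]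
    simp only [skipTwo, crossShift_val, rankTwo]
    split_ifs <;> omega
  rw [← ht]
  exact exchange hK f hf s hs hne a b hab h

/-- A matching containing an edge between non-neighbours. -/
lemma step_far {q n : ℕ} {D : Fin n → Fin n → ℝ} (hK : qKalmanson q D)
    (f : Fin (2*(q+1)+2) → Fin n) (hf : StrictMono f)
    (s : Fin (2*(q+1)+2) → Fin (2*(q+1)+2)) (hs : Function.Involutive s) (hne : ∀ j, s j ≠ j)
    (a b : Fin (2*(q+1)+2)) (hab : a < b) (h : s a = b)
    (h1 : a.val + 2 ≤ b.val) (h2 : b.val + 2 ≤ a.val + (2*q+4)) :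
    ∑ j, D (f j) (f (s j)) ≤ ∑ j, D (f j) (f (crossShift (q+1) j)) := by
  have hbl := b.isLt
  have hE := exchange hK f hf s hs hne a b hab h
  have fin : ∀ c, tauFun q a b c = crossShift (q+1) c →
      ∑ j, D (f j) (f (s j)) ≤ ∑ j, D (f j) (f (crossShift (q+1) j)) := fun c hc =>
    hE.trans (step_antipodal hK f hf _ (tau_invol q a b hab) (tau_ne q a b hab) c hc)
  rcases lt_trichotomy (b.val) (a.val + (q+2)) with h3 | h3 | h3
  · apply fin ⟨a.val + 1, by omega⟩
    rw [tau_val q a b _ (by simp) (by simp; omega)]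
    apply Fin.ext
    simp only [skipTwo, crossShift_val, rankTwo]
    split_ifs <;> omega
  · apply step_antipodal hK f hf s hs hne a
    rw [h]
    apply Fin.ext
    rw [crossShift_val]
    split_ifs <;> omega
  · by_cases h4 : b.val + 1 < 2*(q+1)+2
    · apply fin ⟨b.val + 1, h4⟩
      rw [tau_val q a b _ (by simp; omega) (by simp)]
      apply Fin.ext
      simp only [skipTwo, crossShift_val, rankTwo]
      split_ifs <;> omega
    · apply fin ⟨0, by omega⟩
      rw [tau_val q a b _ (by simp; omega) (by simp; omega)]
      apply Fin.ext
      simp only [skipTwo, crossShift_val, rankTwo]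
      split_ifs <;> omega

lemma step_any {q n : ℕ} (hq : 1 ≤ q) {D : Fin n → Fin n → ℝ} (hK : qKalmanson q D)
    (f : Fin (2*(q+1)+2) → Fin n) (hf : StrictMono f)
    (s : Fin (2*(q+1)+2) → Fin (2*(q+1)+2)) (hs : Function.Involutive s) (hne : ∀ j, s j ≠ j)
    (a b : Fin (2*(q+1)+2)) (hab : a < b) (h : s a = b) :
    ∑ j, D (f j) (f (s j)) ≤ ∑ j, D (f j) (f (crossShift (q+1) j)) := by
  have hbl := b.isLt
  by_cases h0 : a.val + 2 ≤ b.val ∧ b.val + 2 ≤ a.val + (2*q+4)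
  · exact step_far hK f hf s hs hne a b hab h h0.1 h0.2
  have hab' := Fin.lt_def.mp hab
  have hE := exchange hK f hf s hs hne a b hab h
  -- any edge of the new matching joining points at distance `q+1` or `q+3` will do
  obtain ⟨c, d, hcd, h1, h2, h3⟩ : ∃ c d : Fin (2*(q+1)+2), c < d ∧ tauFun q a b c = d ∧
      c.val + 2 ≤ d.val ∧ d.val + 2 ≤ c.val + (2*q+4) := by
    -- the lower endpoint is `0`, `1` or `2`
    obtain ⟨c, hc1, hc2, hc3, hc4⟩ : ∃ c : Fin (2*(q+1)+2), c.val ≠ a.val ∧ c.val ≠ b.val ∧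
        c.val ≤ 2 ∧ (c.val = 0 ∨ a.val = 0 ∧ (b.val = 1 ∨ c.val = 1)) := by
      by_cases ha0 : a.val = 0
      · by_cases hb1 : b.val = 1
        · exact ⟨⟨2, by omega⟩, by simp; omega, by simp; omega, by simp, by dsimp only; omega⟩
        · exact ⟨⟨1, by omega⟩, by simp; omega, by simp; omega, by simp, by dsimp only; omega⟩
      · exact ⟨⟨0, by omega⟩, by simp; omega, by simp; omega, by simp, by dsimp only; omega⟩
    have hd : (c.val < (tauFun q a b c).val) ∧ c.val + 2 ≤ (tauFun q a b c).val ∧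
        (tauFun q a b c).val + 2 ≤ c.val + (2*q+4) := by
      rw [tau_val q a b c hc1 hc2]
      simp only [skipTwo, crossShift_val, rankTwo]
      split_ifs <;> omega
    exact ⟨c, _, Fin.lt_def.mpr hd.1, rfl, hd.2.1, hd.2.2⟩
  exact hE.trans
    (step_far hK f hf _ (tau_invol q a b hab) (tau_ne q a b hab) c d hcd h1 h2 h3)

/-- Lemma 3.2 (subset relation): every symmetric `q`-Kalmanson matrix is also a
`(q+1)`-Kalmanson matrix. -/
theorem qKalmanson_subset_succ (q n : ℕ) (hq : 1 ≤ q)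
    (D : Fin n → Fin n → ℝ) (hsymm : ∀ i j, D i j = D j i)
    (hK : qKalmanson q D) :
    qKalmanson (q+1) D := by
  intro f hf s hs hne
  have h0 := hne ⟨0, by omega⟩
  have hlt : (⟨0, by omega⟩ : Fin (2*(q+1)+2)) < s ⟨0, by omega⟩ := by
    rw [Ne, Fin.ext_iff] at h0
    rw [Fin.lt_def]
    exact Nat.pos_of_ne_zero h0
  exact step_any hq hK f hf s hs hne _ _ hlt rfl
end

section
/- Let q ≥ 2 and let G = (V,A) be a directed graph with |V| = n ≥ 1. If G contains a Hamiltonian circuit, then the undirected graph G_1 constructed from G contains a spanning subgraph C_N^q, where N = n(2q+2): there is a cyclic enumeration of all vertices of G_1 such that any two vertices at circular distance at most q along the enumeration are adjacent in G_1. -/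
/-- The undirected graph `G₁` constructed from the directed graph `G = (Fin n, A)`:
its vertices are the pairs `(v, i)` with `v ∈ Fin n` and `i ∈ Fin (2q+2)` (the vertex
`(v, i)` represents `v_{i+1}`); `(v,i)` and `(v,j)` are adjacent whenever `i ≠ j` and
`|i−j| ≤ q`, and `(u,i)` and `(v,j)` are adjacent whenever `(u,v) ∈ A` and `i−j ≥ q+2`
(the relation below is the symmetrization of this construction). -/
def adj1 (q n : ℕ) (A : Fin n → Fin n → Prop)
    (x y : Fin n × Fin (2*q+2)) : Prop :=
  (x.1 = y.1 ∧ x.2 ≠ y.2 ∧ max x.2.val y.2.val - min x.2.val y.2.val ≤ q) ∨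
  (A x.1 y.1 ∧ y.2.val + (q+2) ≤ x.2.val) ∨
  (A y.1 x.1 ∧ x.2.val + (q+2) ≤ y.2.val)

/-- `(v,i)` lies in the clique part `W₁ ∪ W₂ ∪ … ∪ W_q` of the split graph `G₂`,
i.e. the original index `i+1 ∈ {1,…,2q+2}` is not divisible by `q+1`
(the vertices `(v,i)` with `(q+1) ∣ i+1` form the independent part `W₀`). -/
def inClique (q n : ℕ) (x : Fin n × Fin (2*q+2)) : Prop :=
  (x.2.val + 1) % (q+1) ≠ 0

/-- The split graph `G₂`: the super-graph of `G₁` obtained by additionally joining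
every pair of distinct vertices of `W₁ ∪ W₂ ∪ … ∪ W_q`. -/
def adj2 (q n : ℕ) (A : Fin n → Fin n → Prop)
    (x y : Fin n × Fin (2*q+2)) : Prop :=
  adj1 q n A x y ∨ (x ≠ y ∧ inClique q n x ∧ inClique q n y)

/-- Lemma 5.1: if the directed graph `G = (Fin n, A)` contains a Hamiltonian circuit,
then `G₁` contains a spanning subgraph `C_N^q` with `N = n(2q+2)`: there is a cyclic
enumeration of all vertices of `G₁` in which any two vertices at circular distance at
most `q` are adjacent in `G₁`. -/
theorem spanning_cycle_power_of_hamiltonian (q n : ℕ) (hq : 2 ≤ q) (hn : 1 ≤ n)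
    (A : Fin n → Fin n → Prop)
    (hham : ∃ h : Equiv.Perm (Fin n), ∀ t : Fin n, A (h t) (h (finShift t 1))) :
    ∃ w : Fin (n*(2*q+2)) ≃ (Fin n × Fin (2*q+2)),
      ∀ s : Fin (n*(2*q+2)), ∀ p : ℕ, 1 ≤ p → p ≤ q →
        adj1 q n A (w s) (w (finShift s p)) := by
  obtain ⟨h, hh⟩ := hham
  refine ⟨finProdFinEquiv.symm.trans (Equiv.prodCongr h (Equiv.refl _)), ?_⟩
  intro s p hp1 hpq
  have hsd : s.val / (2*q+2) < n :=
    Nat.div_lt_of_lt_mul (s.isLt.trans_eq (Nat.mul_comm _ _))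
  have hi : s.val % (2*q+2) < 2*q+2 := Nat.mod_lt _ (by omega)
  have hs := Nat.div_add_mod s.val (2*q+2)
  have e1 : ((finShift s p).modNat).val = (s.val + p) % (2*q+2) := by
    simp [finShift, Fin.modNat]
  have e2 : ((finShift s p).divNat).val = ((s.val + p) / (2*q+2)) % n := by
    simp [finShift, Fin.divNat, Nat.mod_mul_left_div_self]
  have e3 : (s.modNat).val = s.val % (2*q+2) := rfl
  have e4 : (s.divNat).val = s.val / (2*q+2) := rfl
  change adj1 q n A (h s.divNat, s.modNat) (h (finShift s p).divNat, (finShift s p).modNat)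
  unfold adj1
  generalize ht : s.val / (2*q+2) = t at *
  generalize hr : s.val % (2*q+2) = r at *
  by_cases hc : r + p < 2*q+2
  · left
    have d : (s.val + p) / (2*q+2) = t := by
      rw [← hs, Nat.add_assoc, Nat.mul_add_div (by omega), Nat.div_eq_of_lt hc, Nat.add_zero]
    have m : (s.val + p) % (2*q+2) = r + p := by
      rw [← hs, Nat.add_assoc, Nat.mul_add_mod, Nat.mod_eq_of_lt hc]
    rw [d, Nat.mod_eq_of_lt hsd] at e2
    rw [m] at e1
    refine ⟨?_, ?_, ?_⟩
    · show h _ = h _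
      exact congrArg h (Fin.ext (e4.trans e2.symm))
    · intro hE
      have := congrArg Fin.val hE
      simp only at this
      omega
    · show max (s.modNat).val ((finShift s p).modNat).val
        - min (s.modNat).val ((finShift s p).modNat).val ≤ q
      omega
  · right; left
    have hk : r + p = (2*q+2) + (r + p - (2*q+2)) := by omega
    have d : (s.val + p) / (2*q+2) = t + 1 := by
      rw [← hs, Nat.add_assoc, Nat.mul_add_div (by omega), hk, Nat.add_div_left _ (by omega),
        Nat.div_eq_of_lt (by omega)]
    have m : (s.val + p) % (2*q+2) = r + p - (2*q+2) := by
      rw [← hs, Nat.add_assoc, Nat.mul_add_mod, hk, Nat.add_mod_left, Nat.mod_eq_of_lt (by omega)]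
      omega
    rw [d] at e2
    rw [m] at e1
    constructor
    · have : (finShift s p).divNat = finShift s.divNat 1 := by
        apply Fin.ext
        rw [e2]
        show _ = ((s.divNat).val + 1) % n
        rw [e4]
      show A (h _) (h _)
      rw [this]
      exact hh _
    · show ((finShift s p).modNat).val + (q+2) ≤ (s.modNat).val
      omega
end

section
/- Let q ≥ 2 and let G = (V,A) be a directed graph with |V| = n ≥ 1. If the undirected graph G_2 constructed from G contains a spanning subgraph C_N^q with N = n(2q+2), then the directed graph G contains a Hamiltonian circuit. -/
theorem adj2_symm {q n : ℕ} {A : Fin n → Fin n → Prop} {x y : Fin n × Fin (2*q+2)}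
    (h : adj2 q n A x y) : adj2 q n A y x := by
  unfold adj2 adj1 at *
  rcases h with (⟨h1, h2, h3⟩ | h | h) | ⟨h1, h2, h3⟩
  · exact Or.inl (Or.inl ⟨h1.symm, h2.symm, by rw [max_comm, min_comm]; exact h3⟩)
  · exact Or.inl (Or.inr (Or.inr h))
  · exact Or.inl (Or.inr (Or.inl h))
  · exact Or.inr ⟨h1.symm, h3, h2⟩

/-- Neighbours of the middle vertex of `v`. -/
theorem nbr_mid {q n : ℕ} {A : Fin n → Fin n → Prop} {x y : Fin n × Fin (2*q+2)}
    (h : adj2 q n A x y) (hx : x.2.val = q) :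
    y.1 = x.1 ∧ y.2.val ≠ q ∧ y.2.val ≠ 2*q+1 := by
  have hy := y.2.isLt
  unfold adj2 adj1 at h
  rcases h with (⟨h1, h2, h3⟩ | ⟨-, h⟩ | ⟨-, h⟩) | ⟨h1, h2, h3⟩
  · have h2' : x.2.val ≠ y.2.val := fun h => h2 (Fin.ext h)
    refine ⟨h1.symm, by omega, by omega⟩
  · omega
  · omega
  · exfalso
    unfold inClique at h2
    rw [hx] at h2
    simp at h2

/-- Neighbours of the last vertex of `v`. -/
theorem nbr_last {q n : ℕ} {A : Fin n → Fin n → Prop} {x y : Fin n × Fin (2*q+2)}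
    (h : adj2 q n A x y) (hx : x.2.val = 2*q+1) :
    (y.1 = x.1 ∧ q < y.2.val ∧ y.2.val < 2*q+1) ∨ (A x.1 y.1 ∧ y.2.val < q) := by
  have hy := y.2.isLt
  unfold adj2 adj1 at h
  rcases h with (⟨h1, h2, h3⟩ | ⟨h1, h⟩ | ⟨-, h⟩) | ⟨h1, h2, h3⟩
  · have h2' : x.2.val ≠ y.2.val := fun h => h2 (Fin.ext h)
    exact Or.inl ⟨h1.symm, by omega, by omega⟩
  · exact Or.inr ⟨h1, by omega⟩
  · omega
  · exfalso
    unfold inClique at h2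
    rw [hx, show 2*q+1+1 = (q+1)*2 by ring] at h2
    simp at h2

/-- A separated set of maximal density meets every window. -/
theorem window {X : Type*} [Fintype X] (N : ℕ) (f : ℤ → X)
    (hf : ∀ k j, f k = f j ↔ (N:ℤ) ∣ k - j) (hs : Function.Surjective f)
    (m : ℕ) (T : Finset X) (hc : T.card * m = Fintype.card X)
    (hsep : ∀ k : ℤ, ∀ d : ℕ, 1 ≤ d → d < m → f k ∈ T → f (k+d) ∉ T) (k : ℤ) :
    ∃ p : ℕ, p < m ∧ f (k - p) ∈ T := by
  choose pos hpos using hs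
  have key : ∀ a b : X, a ∈ T → b ∈ T → ∀ p p' : ℕ, p' < m →
      f (pos a + p) = f (pos b + p') → p' ≤ p := by
    intro a b ha hb p p' hp' h
    by_contra hlt
    rw [hf] at h
    have h2 : f (pos a) = f (pos b + ((p' - p : ℕ) : ℤ)) := by
      rw [hf, Nat.cast_sub (by omega)]
      convert h using 1
      ring
    refine hsep (pos b) (p' - p) (by omega) (by omega) (by rwa [hpos]) ?_
    rw [← h2, hpos]
    exact ha
  let φ : T × Fin m → X := fun y => f (pos y.1 + (y.2.val : ℤ))
  have hinj : Function.Injective φ := by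
    rintro ⟨⟨a, ha⟩, p⟩ ⟨⟨b, hb⟩, p'⟩ h
    simp only [φ] at h
    have h1 := key a b ha hb p p' p'.isLt h
    have h2 := key b a hb ha p' p p.isLt h.symm
    have hp : p = p' := Fin.ext (by omega)
    subst hp
    have : f (pos a) = f (pos b) := by
      rw [hf] at h ⊢
      convert h using 1
      ring
    rw [hpos, hpos] at this
    subst this
    rfl
  have hbij : Function.Bijective φ := by
    rw [Fintype.bijective_iff_injective_and_card]
    refine ⟨hinj, ?_⟩
    simp [hc]
  obtain ⟨⟨⟨a, ha⟩, p⟩, h⟩ := hbij.2 (f k)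
  refine ⟨p, p.isLt, ?_⟩
  have : f (k - (p.val:ℤ)) = f (pos a) := by
    simp only [φ] at h
    have h := h.symm
    rw [hf] at h ⊢
    convert h using 1
    ring
  rw [this, hpos]
  exact ha

/-- From an `n`-periodic enumeration along arcs to a Hamiltonian circuit. -/
theorem circuit_of_seq {n : ℕ} (A : Fin n → Fin n → Prop) (a : ℤ → Fin n)
    (ha : ∀ i j, a i = a j ↔ (n:ℤ) ∣ i - j) (hA : ∀ i, A (a i) (a (i+1))) :
    ∃ h : Equiv.Perm (Fin n), ∀ t : Fin n, A (h t) (h (finShift t 1)) := by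
  have hinj : Function.Injective (fun t : Fin n => a (t.val : ℤ)) := by
    intro s t h
    have h : a (s.val : ℤ) = a (t.val : ℤ) := h
    rw [ha] at h
    have hs := s.isLt
    have ht := t.isLt
    have := Int.eq_zero_of_abs_lt_dvd h (by rw [abs_lt]; constructor <;> omega)
    exact Fin.ext (by omega)
  refine ⟨Equiv.ofBijective _ (Finite.injective_iff_bijective.1 hinj), fun t => ?_⟩
  simp only [Equiv.ofBijective_apply]
  have : a ((finShift t 1).val : ℤ) = a ((t.val:ℤ) + 1) := by
    rw [ha]
    simp only [finShift]
    push_cast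
    have := Int.emod_add_mul_ediv ((t.val:ℤ)+1) n
    exact ⟨-(((t.val:ℤ)+1) / n), by linarith⟩
  rw [this]
  exact hA _

/-- The main argument, for an enumeration indexed by the integers. -/
theorem main_int (q n : ℕ) (hq : 2 ≤ q) (hn : 1 ≤ n)
    (A : Fin n → Fin n → Prop) (f : ℤ → Fin n × Fin (2*q+2))
    (hf : ∀ k j, f k = f j ↔ ((n*(2*q+2) : ℕ):ℤ) ∣ k - j) (hs : Function.Surjective f)
    (hadj : ∀ k : ℤ, ∀ p : ℕ, 1 ≤ p → p ≤ q → adj2 q n A (f k) (f (k+p))) :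
    ∃ h : Equiv.Perm (Fin n), ∀ t : Fin n, A (h t) (h (finShift t 1)) := by
  classical
  have hN : 2*q+2 ≤ n*(2*q+2) := Nat.le_mul_of_pos_left _ hn
  have hadj' : ∀ k j : ℤ, k ≠ j → |k - j| ≤ q → adj2 q n A (f k) (f j) := by
    intro k j hne hab
    rw [abs_le] at hab
    rcases lt_or_gt_of_ne hne with h | h
    · have := hadj k (j - k).toNat (by omega) (by omega)
      rwa [show k + ((j-k).toNat:ℤ) = j by omega] at this
    · have := hadj j (k - j).toNat (by omega) (by omega)
      rw [show j + ((k-j).toNat:ℤ) = k by omega] at this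
      exact adj2_symm this
  -- the independent set
  have hS : ∀ k : ℤ, ∃ p : ℕ, p < q+1 ∧
      f (k - p) ∈ (Finset.univ ×ˢ {⟨q, by omega⟩, ⟨2*q+1, by omega⟩} :
        Finset (Fin n × Fin (2*q+2))) := by
    apply window _ f hf hs
    · rw [Finset.card_product, Finset.card_pair (by simp; omega)]
      simp
      ring
    · intro k d hd1 hd2 h1 h2
      have had := hadj k d hd1 (by omega)
      simp only [Finset.mem_product, Finset.mem_univ, true_and, Finset.mem_insert,
        Finset.mem_singleton, Fin.ext_iff] at h1 h2
      rcases h1 with h1 | h1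
      · have := nbr_mid had h1
        omega
      · have := nbr_last had h1
        omega
  simp only [Finset.mem_product, Finset.mem_univ, true_and, Finset.mem_insert,
        Finset.mem_singleton, Fin.ext_iff] at hS
  have hsepS : ∀ k j : ℤ, k ≠ j → |k - j| ≤ q → ((f k).2.val = q ∨ (f k).2.val = 2*q+1) →
      ((f j).2.val = q ∨ (f j).2.val = 2*q+1) → False := by
    intro k j hne hab h1 h2
    have had := hadj' k j hne hab
    rcases h1 with h1 | h1
    · have := nbr_mid had h1
      omega
    · have := nbr_last had h1
      omega
  have hperS : ∀ k : ℤ, ((f k).2.val = q ∨ (f k).2.val = 2*q+1) →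
      ((f (k + (q+1))).2.val = q ∨ (f (k+(q+1))).2.val = 2*q+1) := by
    intro k hk
    obtain ⟨p, hp, h⟩ := hS (k + (q+1))
    by_cases h0 : p = 0
    · subst h0
      simpa using h
    · exfalso
      refine hsepS k (k + (q+1) - p) (by omega) ?_ hk h
      rw [abs_le]
      constructor <;> omega
  -- the middle vertices
  have hsepQ : ∀ k : ℤ, ∀ d : ℕ, 1 ≤ d → d < 2*q+2 → (f k).2.val = q →
      (f (k+d)).2.val = q → False := by
    intro k d hd1 hd2 h1 h2
    by_cases hd : d ≤ q
    · exact hsepS k (k+d) (by omega) (by rw [abs_le]; constructor <;> omega) (Or.inl h1) (Or.inl h2)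
    by_cases hd' : d = 2*q+1
    · refine hsepS (k+(q+1)) (k+d) (by omega) (by rw [abs_le]; constructor <;> omega)
        (hperS k (Or.inl h1)) (Or.inl h2)
    have e1 := (nbr_mid (hadj' k (k+q) (by omega) (by rw [abs_le]; constructor <;> omega)) h1).1
    have e2 : (f (k+q)).1 = (f (k+d)).1 := by
      exact (nbr_mid (hadj' (k+d) (k+q) (by omega) (by rw [abs_le]; constructor <;> omega)) h2).1
    have : f (k+d) = f k := Prod.ext (e2.symm.trans e1) (Fin.ext (h2.trans h1.symm))
    rw [hf] at this
    have := Int.le_of_dvd (by omega) this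
    omega
  have hQ : ∀ k : ℤ, ∃ p : ℕ, p < 2*q+2 ∧
      f (k - p) ∈ (Finset.univ ×ˢ {⟨q, by omega⟩} : Finset (Fin n × Fin (2*q+2))) := by
    apply window _ f hf hs
    · rw [Finset.card_product]
      simp
    · intro k d hd1 hd2 h1 h2
      simp only [Finset.mem_product, Finset.mem_univ, true_and, 
        Finset.mem_singleton, Fin.ext_iff] at h1 h2
      exact hsepQ k d hd1 hd2 h1 h2
  simp only [Finset.mem_product, Finset.mem_univ, true_and, 
        Finset.mem_singleton, Fin.ext_iff] at hQ
  obtain ⟨k0, hk0⟩ := hs (⟨0, hn⟩, ⟨q, by omega⟩)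
  have hperQ : ∀ k : ℤ, (f k).2.val = q ↔ (f (k + (2*q+2))).2.val = q := by
    intro k
    have step : ∀ k : ℤ, (f k).2.val = q → (f (k + (2*q+2))).2.val = q := by
      intro k hk
      obtain ⟨p, hp, h⟩ := hQ (k + (2*q+2))
      by_cases h0 : p = 0
      · subst h0
        simpa using h
      · exfalso
        refine hsepQ k (2*q+2-p) (by omega) (by omega) hk ?_
        convert h using 4
        omega
    refine ⟨step k, fun hk => ?_⟩
    obtain ⟨p, hp, h⟩ := hQ k
    by_cases h0 : p = 0
    · subst h0
      simpa using h
    · exfalso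
      have h3 := step _ h
      refine hsepQ (k - p + (2*q+2)) p (by omega) (by omega) h3 ?_
      convert hk using 4
      omega
  -- the sequences of middle and last vertices
  have hmid : ∀ i : ℤ, (f (k0 + i*(2*q+2))).2.val = q := by
    intro i
    induction i using Int.induction_on with
    | zero => simp [hk0]
    | succ i ih =>
      rw [hperQ] at ih
      convert ih using 4
      ring
    | pred i ih =>
      rw [hperQ]
      convert ih using 4
      ring
  have hlast : ∀ i : ℤ, (f (k0 + i*(2*q+2) + (q+1))).2.val = 2*q+1 := by
    intro i
    rcases hperS _ (Or.inl (hmid i)) with h | h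
    · exfalso
      exact hsepQ _ (q+1) (by omega) (by omega) (hmid i) (by push_cast; exact h)
    · exact h
  obtain ⟨a, ha⟩ : ∃ a : ℤ → Fin n, ∀ i, a i = (f (k0 + i*(2*q+2))).1 := ⟨_, fun _ => rfl⟩
  obtain ⟨z, hz⟩ : ∃ z : ℤ → Fin n, ∀ i, z i = (f (k0 + i*(2*q+2) + (q+1))).1 :=
    ⟨_, fun _ => rfl⟩
  have hainj : ∀ i j, a i = a j ↔ (n:ℤ) ∣ i - j := by
    intro i j
    have h1 : a i = a j ↔ f (k0 + i*(2*q+2)) = f (k0 + j*(2*q+2)) := by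
      rw [ha, ha]
      refine ⟨fun h => Prod.ext h (Fin.ext ((hmid i).trans (hmid j).symm)), fun h => by rw [h]⟩
    rw [h1, hf, show k0 + i*(2*q+2) - (k0 + j*(2*q+2)) = (i-j)*(2*q+2:ℤ) by ring]
    push_cast
    exact mul_dvd_mul_iff_right (by omega)
  -- elements after and before a middle vertex
  have hafter : ∀ i : ℤ, ∀ d : ℕ, 1 ≤ d → d ≤ q →
      (f (k0 + i*(2*q+2) + d)).1 = a i ∧
      ((a i = z i ∧ q < (f (k0 + i*(2*q+2) + d)).2.val) ∨
       (A (z i) (a i) ∧ (f (k0 + i*(2*q+2) + d)).2.val < q)) := by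
    intro i d h1 h2
    have e := (nbr_mid (hadj' (k0 + i*(2*q+2)) (k0 + i*(2*q+2) + d) (by omega)
      (by rw [abs_le]; constructor <;> omega)) (hmid i)).1
    rw [← ha] at e
    have e2 := nbr_last (hadj' (k0 + i*(2*q+2) + (q+1)) (k0 + i*(2*q+2) + d) (by omega)
      (by rw [abs_le]; constructor <;> omega)) (hlast i)
    rw [← hz, e] at e2
    exact ⟨e, e2.imp (fun h => ⟨h.1, h.2.1⟩) id⟩
  have hbefore : ∀ i : ℤ, ∀ d : ℕ, 1 ≤ d → d ≤ q →
      (f (k0 + i*(2*q+2) - d)).1 = a i ∧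
      ((a i = z (i-1) ∧ q < (f (k0 + i*(2*q+2) - d)).2.val) ∨
       (A (z (i-1)) (a i) ∧ (f (k0 + i*(2*q+2) - d)).2.val < q)) := by
    intro i d h1 h2
    have e := (nbr_mid (hadj' (k0 + i*(2*q+2)) (k0 + i*(2*q+2) - d) (by omega)
      (by rw [abs_le]; constructor <;> omega)) (hmid i)).1
    rw [← ha] at e
    have hr : k0 + (i-1)*(2*q+2) + (q+1) = k0 + i*(2*q+2) - (q+1) := by ring
    have hl := hlast (i-1)
    have hz' := hz (i-1)
    rw [hr] at hl hz'
    have e2 := nbr_last (hadj' (k0 + i*(2*q+2) - (q+1)) (k0 + i*(2*q+2) - d) (by omega)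
      (by rw [abs_le]; constructor <;> omega)) hl
    rw [← hz', e] at e2
    exact ⟨e, e2.imp (fun h => ⟨h.1, h.2.1⟩) id⟩
  -- every other vertex is close to its middle vertex
  have hclose : ∀ x : Fin n × Fin (2*q+2), x.2.val ≠ q → x.2.val ≠ 2*q+1 →
      ∃ i : ℤ, ∃ d : ℕ, 1 ≤ d ∧ d ≤ q ∧
        (f (k0 + i*(2*q+2) + d) = x ∨ f (k0 + i*(2*q+2) - d) = x) := by
    intro x h1 h2
    obtain ⟨k, rfl⟩ := hs x
    have e := Int.emod_add_mul_ediv (k - k0) (2*q+2)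
    have e1 := Int.emod_nonneg (k - k0) (show (2*q+2:ℤ) ≠ 0 by omega)
    have e2 := Int.emod_lt_of_pos (k - k0) (show (0:ℤ) < 2*q+2 by omega)
    generalize (k - k0) / (2*q+2:ℤ) = i at e
    generalize (k - k0) % (2*q+2:ℤ) = r at e e1 e2
    have hk : k = k0 + i*(2*q+2) + r := by linarith
    by_cases r0 : r = 0
    · rw [hk, r0, add_zero] at h1
      exact absurd (hmid i) h1
    by_cases rq : r = q+1
    · rw [hk, rq] at h2
      exact absurd (hlast i) h2
    by_cases hr : r ≤ q
    · refine ⟨i, r.toNat, by omega, by omega, Or.inl ?_⟩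
      congr 1
      rw [hk]
      omega
    · refine ⟨i+1, (2*q+2-r).toNat, by omega, by omega, Or.inr ?_⟩
      congr 1
      rw [hk, add_mul]
      omega
  by_cases hn1 : n = 1
  · subst hn1
    obtain ⟨i, d, hd1, hd2, h⟩ := hclose (0, ⟨0, by omega⟩) (by simp; omega) (by simp)
    refine ⟨Equiv.refl _, fun t => ?_⟩
    have hA : A (0 : Fin 1) 0 := by
      rcases h with h | h
      · have := (hafter i d hd1 hd2).2
        rw [h] at this
        rcases this with ⟨-, h'⟩ | ⟨h', -⟩
        · simp at h'
        · rwa [Subsingleton.elim (z i) 0, Subsingleton.elim (a i) 0] at h'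
      · have := (hbefore i d hd1 hd2).2
        rw [h] at this
        rcases this with ⟨-, h'⟩ | ⟨h', -⟩
        · simp at h'
        · rwa [Subsingleton.elim (z (i-1)) 0, Subsingleton.elim (a i) 0] at h'
    convert hA
  have hne : ∀ i, a i ≠ a (i+1) := by
    intro i h
    rw [hainj, show i - (i+1) = -1 by ring, Int.dvd_neg] at h
    have := Int.le_of_dvd (by norm_num) h
    omega
  have hRL : ∀ i, a i = z i ∨ a i = z (i-1) := by
    intro i
    obtain ⟨j, d, hd1, hd2, h⟩ := hclose (a i, ⟨2*q, by omega⟩) (by simp; omega) (by simp)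
    have main : a j = a i ∧ (a j = z j ∨ a j = z (j-1)) := by
      rcases h with h | h
      · have := hafter j d hd1 hd2
        rw [h] at this
        refine ⟨this.1.symm, ?_⟩
        rcases this.2 with h' | ⟨-, h'⟩
        · exact Or.inl h'.1
        · simp at h'
          omega
      · have := hbefore j d hd1 hd2
        rw [h] at this
        refine ⟨this.1.symm, ?_⟩
        rcases this.2 with h' | ⟨-, h'⟩
        · exact Or.inr h'.1
        · simp at h'
          omega
    obtain ⟨hji, hm⟩ := main
    have hdvd := (hainj j i).1 hji
    have hzper : ∀ i j : ℤ, (n:ℤ) ∣ i - j → z i = z j := by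
      intro i j h
      rw [hz, hz]
      congr 1
      rw [hf, show k0 + i*(2*q+2) + (q+1) - (k0 + j*(2*q+2) + (q+1)) = (i-j)*(2*q+2:ℤ) by ring]
      push_cast
      exact mul_dvd_mul_right h _
    rw [hji, hzper j i hdvd, hzper (j-1) (i-1) (by convert hdvd using 1; ring)] at hm
    exact hm
  by_cases hR : ∃ i, a i = z i
  · -- forward orientation
    obtain ⟨i0, hi0⟩ := hR
    have hfwd : ∀ m : ℕ, a (i0 + m) = z (i0 + m) := by
      intro m
      induction m with
      | zero => simpa using hi0
      | succ m ih =>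
        push_cast
        rw [← add_assoc]
        rcases hRL (i0 + m + 1) with h | h
        · exact h
        · rw [add_sub_cancel_right, ← ih] at h
          exact absurd h.symm (hne _)
    have hA : ∀ m : ℕ, A (a (i0 + m)) (a (i0 + m + 1)) := by
      intro m
      have := (hbefore (i0 + m + 1) 1 le_rfl (by omega)).2
      rw [add_sub_cancel_right, ← hfwd] at this
      rcases this with ⟨h, -⟩ | ⟨h, -⟩
      · exact absurd h.symm (hne _)
      · exact h
    refine circuit_of_seq A a hainj fun i => ?_
    have hpos : (0:ℤ) < n := by omega
    have e := Int.emod_add_mul_ediv (i - i0) n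
    have e1 := Int.emod_nonneg (i - i0) hpos.ne'
    have h := hA ((i - i0) % n).toNat
    rw [Int.toNat_of_nonneg e1] at h
    have c1 : a (i0 + (i - i0) % n) = a i := by
      rw [hainj]
      exact ⟨-((i-i0)/n), by linarith⟩
    have c2 : a (i0 + (i - i0) % n + 1) = a (i+1) := by
      rw [hainj]
      exact ⟨-((i-i0)/n), by linarith⟩
    rwa [c1, c2] at h
  · -- backward orientation
    push Not at hR
    refine circuit_of_seq A (fun i => a (-i)) ?_ ?_
    · intro i j
      rw [hainj, show -i - -j = -(i - j) by ring, dvd_neg]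
    · intro i
      have h1 : a (-i) = z (-i-1) := (hRL (-i)).resolve_left (hR _)
      have := (hafter (-i-1) 1 le_rfl (by omega)).2
      rw [← h1] at this
      have hr : -(i+1) = -i-1 := by ring
      show A (a (-i)) (a (-(i+1)))
      rw [hr]
      rcases this with ⟨h, -⟩ | ⟨h, -⟩
      · have := hne (-i-1)
        rw [sub_add_cancel] at this
        exact absurd h this
      · exact h

/-- Lemma 5.3: if the split graph `G₂` contains a spanning subgraph `C_N^q` with
`N = n(2q+2)` (a cyclic enumeration of all its vertices in which any two vertices at
circular distance at most `q` are adjacent in `G₂`), then the directed graph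
`G = (Fin n, A)` contains a Hamiltonian circuit. -/
theorem hamiltonian_of_spanning_cycle_power (q n : ℕ) (hq : 2 ≤ q) (hn : 1 ≤ n)
    (A : Fin n → Fin n → Prop)
    (hspan : ∃ w : Fin (n*(2*q+2)) ≃ (Fin n × Fin (2*q+2)),
      ∀ s : Fin (n*(2*q+2)), ∀ p : ℕ, 1 ≤ p → p ≤ q →
        adj2 q n A (w s) (w (finShift s p))) :
    ∃ h : Equiv.Perm (Fin n), ∀ t : Fin n, A (h t) (h (finShift t 1)) := by
  obtain ⟨w, hw⟩ := hspan
  have hNpos : 0 < n*(2*q+2) := by positivity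
  have hNz : ((n*(2*q+2) : ℕ):ℤ) ≠ 0 := by omega
  have hlt : ∀ k : ℤ, (k % ((n*(2*q+2) : ℕ):ℤ)).toNat < n*(2*q+2) := by
    intro k
    have h1 := Int.emod_nonneg k hNz
    have h2 := Int.emod_lt_of_pos k (show (0:ℤ) < ((n*(2*q+2) : ℕ):ℤ) by omega)
    omega
  refine main_int q n hq hn A (fun k => w ⟨(k % ((n*(2*q+2) : ℕ):ℤ)).toNat, hlt k⟩) ?_ ?_ ?_
  · intro k j
    rw [w.injective.eq_iff, Fin.mk.injEq, ← Int.emod_emod_of_dvd k dvd_rfl]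
    have h1 := Int.emod_nonneg k hNz
    have h2 := Int.emod_nonneg j hNz
    rw [Int.emod_emod_of_dvd k dvd_rfl]
    constructor
    · intro h
      exact Int.ModEq.dvd (show j % _ = k % _ by omega)
    · intro h
      have h : j % _ = k % _ := (Int.modEq_iff_dvd.2 h)
      rw [h]
  · intro x
    refine ⟨((w.symm x).val : ℤ), ?_⟩
    have : (⟨(((w.symm x).val : ℤ) % ((n*(2*q+2) : ℕ):ℤ)).toNat, hlt _⟩ : Fin (n*(2*q+2)))
        = w.symm x := by
      apply Fin.ext
      show (((w.symm x).val : ℤ) % ((n*(2*q+2) : ℕ):ℤ)).toNat = _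
      rw [← Int.natCast_mod, Int.toNat_natCast, Nat.mod_eq_of_lt (w.symm x).isLt]
    show w _ = x
    rw [this, Equiv.apply_symm_apply]
  · intro k p hp1 hp2
    have := hw ⟨(k % ((n*(2*q+2) : ℕ):ℤ)).toNat, hlt k⟩ p hp1 hp2
    convert this using 2
    apply Fin.ext
    show ((k + p) % ((n*(2*q+2) : ℕ):ℤ)).toNat
      = ((k % ((n*(2*q+2) : ℕ):ℤ)).toNat + p) % (n*(2*q+2))
    have h1 := Int.emod_nonneg k hNz
    clear this hlt hw
    generalize n*(2*q+2) = N at *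
    zify
    rw [Int.toNat_of_nonneg (Int.emod_nonneg _ hNz), Int.toNat_of_nonneg h1]
    simp
end

section
/- Let q ≥ 2 and let G = (V,A) be a directed graph. The graph G_1 constructed from G is (q+1)-partite: the sets W_0, W_1, …, W_q partition the vertex set of G_1, and each W_ℓ is an independent set in G_1. -/
/-- Two indices below `2q+2` in the same class mod `q+1` are equal or differ by `q+1`. -/
theorem index_class_aux (q a b : ℕ) (hab : a ≤ b) (hb : b < 2*q+2)
    (h : (a + 1) % (q+1) = (b + 1) % (q+1)) : b = a ∨ b = a + (q+1) := by
  have h1 : (q+1) ∣ (b + 1) - (a + 1) := (Nat.modEq_iff_dvd' (by omega)).1 h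
  obtain ⟨k, hk⟩ := h1
  rcases k with _ | _ | k
  · left; simp at hk; omega
  · right; simp at hk; omega
  · exfalso
    have : (q+1) * (k+1+1) = (q+1)*k + 2*q+2 := by ring
    have := Nat.zero_le ((q+1)*k)
    omega

/-- The graph `G₁` is `(q+1)`-partite: the sets `W₀, W₁, …, W_q` (where `W_ℓ` consists
of the vertices `(v,i)` whose original index `i+1` is congruent to `ℓ` modulo `q+1`)
partition the vertex set, and each `W_ℓ` is an independent set in `G₁`. -/
theorem G1_is_q_add_one_partite (q n : ℕ) (hq : 2 ≤ q) (A : Fin n → Fin n → Prop) :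
    (∀ x : Fin n × Fin (2*q+2), ∃! ℓ : Fin (q+1), (x.2.val + 1) % (q+1) = ℓ.val) ∧
    (∀ x y : Fin n × Fin (2*q+2),
      (x.2.val + 1) % (q+1) = (y.2.val + 1) % (q+1) → ¬ adj1 q n A x y) := by
  refine ⟨fun x => ⟨⟨(x.2.val + 1) % (q+1), Nat.mod_lt _ (by omega)⟩, rfl, ?_⟩, ?_⟩
  · intro y hy
    exact Fin.ext hy.symm
  · rintro ⟨u, i⟩ ⟨v, j⟩ h hadj
    have hi := i.isLt
    have hj := j.isLt
    have key : i.val = j.val ∨ i.val = j.val + (q+1) ∨ j.val = i.val + (q+1) := by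
      rcases le_total i.val j.val with hl | hl
      · rcases index_class_aux q _ _ hl hj h with e | e <;> omega
      · rcases index_class_aux q _ _ hl hi h.symm with e | e <;> omega
    rcases hadj with ⟨_, hne, hd⟩ | ⟨_, hd⟩ | ⟨_, hd⟩
    · have hne' : i.val ≠ j.val := fun e => hne (Fin.ext e)
      simp only at hd
      omega
    · simp only at hd
      omega
    · simp only at hd
      omega
end

section
/- For every n ≥ 5, the graph C_n^2 has no vertex cut set of size 3: for every set S of at most 3 vertices of C_n^2, the subgraph of C_n^2 induced on the remaining vertices is connected. -/
/-- Adjacency in the graph `C_n^q`: distinct vertices `i` and `j` (represented by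
`Fin n`) are adjacent whenever `|i−j| ≤ q` or `|i−j| ≥ n−q`. -/
def powAdj (n q : ℕ) (i j : Fin n) : Prop :=
  i ≠ j ∧ (max i.val j.val - min i.val j.val ≤ q ∨ n - q ≤ max i.val j.val - min i.val j.val)

lemma powAdj_step (n : ℕ) (hn : 5 ≤ n) (k d : ℕ) (hd : d = 1 ∨ d = 2)
    (h1 : k % n < n) (h2 : (k + d) % n < n) :
    powAdj n 2 ⟨k % n, h1⟩ ⟨(k + d) % n, h2⟩ := by
  have e : (k + d) % n = if k % n + d < n then k % n + d else k % n + d - n := by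
    rw [Nat.add_mod, Nat.mod_eq_of_lt (show d < n by omega)]
    split_ifs with h
    · exact Nat.mod_eq_of_lt h
    · rw [Nat.mod_eq_sub_mod (by omega), Nat.mod_eq_of_lt (by omega)]
  generalize (k + d) % n = y at *
  generalize k % n = x at *
  unfold powAdj
  simp only [ne_eq, Fin.mk.injEq]
  split_ifs at e <;> omega

lemma walk_up (n : ℕ) (hn : 5 ≤ n) (S : Finset (Fin n)) (f : ℕ → Fin n)
    (hf : ∀ k d, d = 1 ∨ d = 2 → powAdj n 2 (f k) (f (k + d))) (m : ℕ) :
    ∀ a, f a ∉ S → f (a + m) ∉ S →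
      (∀ k, a < k → k + 1 < a + m → f k ∈ S → f (k + 1) ∉ S) →
      Relation.ReflTransGen (fun a b => powAdj n 2 a b ∧ a ∉ S ∧ b ∉ S) (f a) (f (a + m)) := by
  induction m using Nat.strong_induction_on with
  | _ m ih =>
    intro a ha hb h
    by_cases h0 : m = 0
    · subst h0; exact .refl
    by_cases h1 : f (a + 1) ∈ S
    · have hm1 : m ≠ 1 := by rintro rfl; exact hb h1
      have h2 : f (a + 2) ∉ S := by
        by_cases hm2 : m = 2
        · subst hm2; exact hb
        · exact h (a + 1) (by omega) (by omega) h1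
      have e : a + 2 + (m - 2) = a + m := by omega
      have := ih (m - 2) (by omega) (a + 2) h2 (by rwa [e])
        (fun k hk hk' => h k (by omega) (by omega))
      rw [e] at this
      exact .head ⟨hf a 2 (Or.inr rfl), ha, h2⟩ this
    · have e : a + 1 + (m - 1) = a + m := by omega
      have := ih (m - 1) (by omega) (a + 1) h1 (by rwa [e])
        (fun k hk hk' => h k (by omega) (by omega))
      rw [e] at this
      exact .head ⟨hf a 1 (Or.inl rfl), ha, h1⟩ this

lemma rel_symm (n : ℕ) (S : Finset (Fin n)) (u v : Fin n)
    (h : Relation.ReflTransGen (fun a b => powAdj n 2 a b ∧ a ∉ S ∧ b ∉ S) u v) :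
    Relation.ReflTransGen (fun a b => powAdj n 2 a b ∧ a ∉ S ∧ b ∉ S) v u := by
  induction h with
  | refl => exact .refl
  | tail _ hbc ih =>
    obtain ⟨⟨h1, h2⟩, h3, h4⟩ := hbc
    refine .head ⟨⟨h1.symm, ?_⟩, h4, h3⟩ ih
    rwa [max_comm, min_comm]

lemma conn_le (n : ℕ) (hn : 5 ≤ n)
    (S : Finset (Fin n)) (hS : S.card ≤ 3)
    (u v : Fin n) (hu : u ∉ S) (hv : v ∉ S) (huv : u.val ≤ v.val) :
    Relation.ReflTransGen (fun a b => powAdj n 2 a b ∧ a ∉ S ∧ b ∉ S) u v := by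
  have hlt : ∀ k, k % n < n := fun k => Nat.mod_lt _ (by omega)
  let f : ℕ → Fin n := fun k => ⟨k % n, hlt k⟩
  have hf : ∀ k d, d = 1 ∨ d = 2 → powAdj n 2 (f k) (f (k + d)) :=
    fun k d hd => powAdj_step n hn k d hd _ _
  have fu : f u.val = u := Fin.ext (Nat.mod_eq_of_lt u.2)
  have fv : f v.val = v := Fin.ext (Nat.mod_eq_of_lt v.2)
  have fun' : f (u.val + n) = u := Fin.ext (by simp [f, Nat.mod_eq_of_lt u.2])
  have e1 : u.val + (v.val - u.val) = v.val := by omega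
  have e2 : v.val + (u.val + n - v.val) = u.val + n := by omega
  have w1 := walk_up n hn S f hf (v.val - u.val) u.val
  have w2 := walk_up n hn S f hf (u.val + n - v.val) v.val
  rw [e1, fu, fv] at w1
  rw [e2, fv, fun'] at w2
  by_cases c1 : ∀ k, u.val < k → k + 1 < v.val → f k ∈ S → f (k + 1) ∉ S
  · exact w1 hu hv c1
  by_cases c2 : ∀ k, v.val < k → k + 1 < u.val + n → f k ∈ S → f (k + 1) ∉ S
  · exact rel_symm _ _ _ _ (w2 hv hu c2)
  exfalso
  push Not at c1 c2
  obtain ⟨k, hk1, hk2, hk3, hk4⟩ := c1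
  obtain ⟨l, hl1, hl2, hl3, hl4⟩ := c2
  have inj : ∀ a b, a < b → b < a + n → f a ≠ f b := by
    intro a b h1 h2 h
    have h3 : a ≡ b [MOD n] := congrArg Fin.val h
    have h4 := (Nat.modEq_iff_dvd' h1.le).1 h3
    have := Nat.le_of_dvd (by omega) h4
    omega
  have hsub : ({f k, f (k + 1), f l, f (l + 1)} : Finset (Fin n)) ⊆ S := by
    intro x hx
    simp only [Finset.mem_insert, Finset.mem_singleton] at hx
    rcases hx with rfl | rfl | rfl | rfl <;> assumption
  have hc : ({f k, f (k + 1), f l, f (l + 1)} : Finset (Fin n)).card = 4 := by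
    have a1 := inj k (k + 1) (by omega) (by omega)
    have a2 := inj k l (by omega) (by omega)
    have a3 := inj k (l + 1) (by omega) (by omega)
    have a4 := inj (k + 1) l (by omega) (by omega)
    have a5 := inj (k + 1) (l + 1) (by omega) (by omega)
    have a6 := inj l (l + 1) (by omega) (by omega)
    rw [Finset.card_insert_of_notMem, Finset.card_insert_of_notMem, Finset.card_pair a6] <;>
      simp only [Finset.mem_insert, Finset.mem_singleton, not_or]
    · exact ⟨a4, a5⟩
    · exact ⟨a1, a2, a3⟩
  have := Finset.card_le_card hsub
  omega

/-- For every `n ≥ 5`, the graph `C_n^2` has no vertex cut set of size 3: after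
removing any set `S` of at most 3 vertices, any two remaining vertices are joined by
a path avoiding `S` (i.e. the induced subgraph on the remaining vertices is
connected). -/
theorem cycle_square_no_three_cut (n : ℕ) (hn : 5 ≤ n)
    (S : Finset (Fin n)) (hS : S.card ≤ 3)
    (u v : Fin n) (hu : u ∉ S) (hv : v ∉ S) :
    Relation.ReflTransGen (fun a b => powAdj n 2 a b ∧ a ∉ S ∧ b ∉ S) u v := by
  rcases le_total u.val v.val with h | h
  · exact conn_le n hn S hS u v hu hv h
  · exact rel_symm _ _ _ _ (conn_le n hn S hS v u hv hu h)
end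

section
/- Let G be an undirected graph on n ≥ 5 vertices that contains no five distinct vertices u, v, x, y, z such that u and v are adjacent and each of x, y, z is adjacent to both u and v. If φ and φ' are two spines of spanning subgraphs C_n^2 of G (i.e. cyclic enumerations of all vertices of G such that any two vertices at circular distance at most 2 along the enumeration are adjacent in G) which agree on the first three vertices, φ(1) = φ'(1), φ(2) = φ'(2), φ(3) = φ'(3), then φ = φ'. In particular, a spanning subgraph C_n^2 of such a graph is completely determined by the first three vertices of its spine. -/
/-- Let `G` be an undirected graph on `n ≥ 5` vertices containing no five distinct
vertices `u, v, x, y, z` with `u` adjacent to `v` and `x, y, z` common neighbours of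
`u` and `v`.  If `φ` and `φ'` are spines of spanning subgraphs `C_n^2` of `G`
(cyclic enumerations of the vertices in which any two vertices at circular distance
at most 2 are adjacent) agreeing on the first three vertices, then `φ = φ'`;
in particular a spanning `C_n^2` is determined by the first three spine vertices. -/
theorem spine_determined_by_first_three (n : ℕ) (hn : 5 ≤ n)
    (G : SimpleGraph (Fin n))
    (hno : ¬ ∃ u v x y z : Fin n,
      u ≠ v ∧ u ≠ x ∧ u ≠ y ∧ u ≠ z ∧ v ≠ x ∧ v ≠ y ∧ v ≠ z ∧
      x ≠ y ∧ x ≠ z ∧ y ≠ z ∧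
      G.Adj u v ∧ G.Adj u x ∧ G.Adj v x ∧ G.Adj u y ∧ G.Adj v y ∧
      G.Adj u z ∧ G.Adj v z)
    (φ φ' : Equiv.Perm (Fin n))
    (hφ : ∀ i : Fin n, ∀ p : ℕ, 1 ≤ p → p ≤ 2 → G.Adj (φ i) (φ (finShift i p)))
    (hφ' : ∀ i : Fin n, ∀ p : ℕ, 1 ≤ p → p ≤ 2 → G.Adj (φ' i) (φ' (finShift i p)))
    (h1 : φ ⟨0, by omega⟩ = φ' ⟨0, by omega⟩)
    (h2 : φ ⟨1, by omega⟩ = φ' ⟨1, by omega⟩)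
    (h3 : φ ⟨2, by omega⟩ = φ' ⟨2, by omega⟩) :
    φ = φ' := by
  have key : ∀ ψ : Equiv.Perm (Fin n),
      (∀ i : Fin n, ∀ p : ℕ, 1 ≤ p → p ≤ 2 → G.Adj (ψ i) (ψ (finShift i p))) →
      ∀ a b : ℕ, ∀ ha : a < n, ∀ hb : b < n, a < b → b ≤ a + 2 →
      G.Adj (ψ ⟨a, ha⟩) (ψ ⟨b, hb⟩) := by
    intro ψ hψ a b ha hb hab hba
    have h := hψ ⟨a, ha⟩ (b - a) (by omega) (by omega)
    have e : finShift (⟨a, ha⟩ : Fin n) (b - a) = ⟨b, hb⟩ := by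
      apply Fin.ext
      change (a + (b - a)) % n = b
      rw [Nat.add_sub_cancel' hab.le, Nat.mod_eq_of_lt hb]
    rwa [e] at h
  have inj : ∀ ψ : Equiv.Perm (Fin n), ∀ a b : ℕ, ∀ ha : a < n, ∀ hb : b < n, a ≠ b →
      ψ ⟨a, ha⟩ ≠ ψ ⟨b, hb⟩ := by
    intro ψ a b ha hb hab h
    exact hab (Fin.mk.inj (ψ.injective h))
  have main : ∀ k : ℕ, ∀ hk : k < n, φ ⟨k, hk⟩ = φ' ⟨k, hk⟩ := by
    intro k
    induction k using Nat.strong_induction_on with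
    | _ k ih =>
      match k, ih with
      | 0, _ => intro _; exact h1
      | 1, _ => intro _; exact h2
      | 2, _ => intro _; exact h3
      | k + 3, ih =>
        intro hk
        by_contra hne
        have e0 := ih k (by omega) (by omega)
        have e1 := ih (k + 1) (by omega) (by omega)
        have e2 := ih (k + 2) (by omega) (by omega)
        have i0 := inj φ' k (k + 3) (by omega) hk (by omega)
        have i1 := inj φ' (k + 1) (k + 3) (by omega) hk (by omega)
        have i2 := inj φ' (k + 2) (k + 3) (by omega) hk (by omega)
        have a1 := key φ' hφ' (k + 1) (k + 3) (by omega) hk (by omega) (by omega)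
        have a2 := key φ' hφ' (k + 2) (k + 3) (by omega) hk (by omega) (by omega)
        rw [← e0] at i0
        rw [← e1] at i1 a1
        rw [← e2] at i2 a2
        exact hno ⟨φ ⟨k + 1, by omega⟩, φ ⟨k + 2, by omega⟩, φ ⟨k, by omega⟩,
          φ ⟨k + 3, hk⟩, φ' ⟨k + 3, hk⟩,
          inj φ _ _ _ _ (by omega), inj φ _ _ _ _ (by omega), inj φ _ _ _ _ (by omega), i1,
          inj φ _ _ _ _ (by omega), inj φ _ _ _ _ (by omega), i2,
          inj φ _ _ _ _ (by omega), i0, hne,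
          key φ hφ _ _ _ _ (by omega) (by omega),
          (key φ hφ _ _ _ _ (by omega) (by omega)).symm,
          (key φ hφ _ _ _ _ (by omega) (by omega)).symm,
          key φ hφ _ _ _ _ (by omega) (by omega),
          key φ hφ _ _ _ _ (by omega) (by omega), a1, a2⟩
  exact Equiv.ext fun i => main i.val i.isLt
end
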